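/- There exist compact subsets C₀ ⊆ G₀ and C_H ⊆ H such that G₀ = C_H · A_H^+ · A₀^+ · C₀, i.e. every g ∈ G₀ can be written g = k_H a_H a₀ k₀ with k_H ∈ C_H, a_H ∈ A_H^+, a₀ ∈ A₀^+ and k₀ ∈ C₀ (a relative Cartan decomposition of the unitary group G₀ with respect to the subgroup H). -/

import Mathlib

/-! Common setup for the p-adic statements.  `E` is a nonarchimedean local field of
characteristic zero (a complete, nontrivially normed field with ultrametric norm,
compact unit ball, and discrete valuation `valE` normalized at a uniformizer `πE`),
`σ` is an involution of `E`, and `(V₀, h)` is a hermitian space over `E` relative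
to `σ`.  The unitary group `G₀` is realized inside the continuous linear
endomorphisms of `V₀`. -/

section PadSetup

variable (E : Type*) [NontriviallyNormedField E]
variable (V₀ : Type*) [NormedAddCommGroup V₀] [NormedSpace E V₀]

/-- The unitary group `G₀ = U(V₀, h)`. -/
def PadG (h : V₀ → V₀ → E) : Set (V₀ →L[E] V₀) :=
  {g | Function.Bijective (⇑g) ∧ ∀ u v : V₀, h (g u) (g v) = h u v}

/-- The subgroup `H` of `G₀` fixing `w₀` (the unitary group of `W = (Ew₀)^⊥`). -/
def PadH (h : V₀ → V₀ → E) (w₀ : V₀) : Set (V₀ →L[E] V₀) :=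
  {g | g ∈ PadG E V₀ h ∧ g w₀ = w₀}

/-- The anisotropic kernel `V_{an,0}`: the orthogonal complement of the hyperbolic
space `⊕ᵢ (Euᵢ ⊕ Eu₋ᵢ)`, where `u±ᵢ = w_{2i−2} ± w_{2i−1}` for `1 ≤ i ≤ r₀ = ⌊(l+1)/2⌋`. -/
def PadVan (h : V₀ → V₀ → E) (l : ℕ) (w : ℕ → V₀) : Set V₀ :=
  {v | ∀ i : ℕ, 1 ≤ i → i ≤ (l + 1) / 2 →
    h v (w (2 * i - 2) + w (2 * i - 1)) = 0 ∧ h v (w (2 * i - 2) - w (2 * i - 1)) = 0}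

/-- `R_{an,0} = {v ∈ V_{an,0} : val_E h(v,v) ≥ val_E ν₀ − 1}`. -/
def PadRan (h : V₀ → V₀ → E) (l : ℕ) (w : ℕ → V₀) (valE : E → ℤ) (ν₀ : E) : Set V₀ :=
  {v | v ∈ PadVan E V₀ h l w ∧ (v = 0 ∨ valE ν₀ - 1 ≤ valE (h v v))}

/-- The lattice `R₀ = O_E u₁ + O_E u₋₁ + … + O_E u_{r₀} + O_E u₋_{r₀} + R_{an,0}`. -/
def PadR0 (h : V₀ → V₀ → E) (l : ℕ) (w : ℕ → V₀) (valE : E → ℤ) (ν₀ : E) : Set V₀ :=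
  {v | ∃ (a b : ℕ → E) (x : V₀), x ∈ PadRan E V₀ h l w valE ν₀ ∧
    (∀ i, ‖a i‖ ≤ 1) ∧ (∀ i, ‖b i‖ ≤ 1) ∧
    v = (∑ i ∈ Finset.Icc 1 ((l + 1) / 2), a i • (w (2 * i - 2) + w (2 * i - 1))) +
      (∑ i ∈ Finset.Icc 1 ((l + 1) / 2), b i • (w (2 * i - 2) - w (2 * i - 1))) + x}

end PadSetup

section PadSetup3

variable (E : Type*) [NontriviallyNormedField E]
variable (V₀ : Type*) [NormedAddCommGroup V₀] [NormedSpace E V₀]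

/-- The anisotropic kernel `W_an` of `W = (Ew₀)^⊥`: the orthogonal complement in `W` of
`⊕ᵢ (Eu'ᵢ ⊕ Eu'₋ᵢ)`, where `u'±ᵢ = w_{2i−1} ± w_{2i}` for `1 ≤ i ≤ r₁ = ⌊l/2⌋`. -/
def PadWan (h : V₀ → V₀ → E) (l : ℕ) (w : ℕ → V₀) : Set V₀ :=
  {v | h v (w 0) = 0 ∧ ∀ i : ℕ, 1 ≤ i → i ≤ l / 2 →
    h v (w (2 * i - 1) + w (2 * i)) = 0 ∧ h v (w (2 * i - 1) - w (2 * i)) = 0}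

/-- The positive chamber `A₀⁺` of the maximal split torus `A₀` of `G₀`: elements acting by
`aᵢ` on `uᵢ`, by `σ(aᵢ)⁻¹` on `u₋ᵢ`, trivially on `V_{an,0}`, with
`val_E a₁ ≥ … ≥ val_E a_{r₀} ≥ 0`. -/
def PadA0 (h : V₀ → V₀ → E) (σ : E → E) (valE : E → ℤ) (l : ℕ) (w : ℕ → V₀) :
    Set (V₀ →L[E] V₀) :=
  {g | g ∈ PadG E V₀ h ∧ ∃ a : ℕ → E,
    (∀ i : ℕ, 1 ≤ i → i ≤ (l + 1) / 2 → a i ≠ 0 ∧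
      g (w (2 * i - 2) + w (2 * i - 1)) = a i • (w (2 * i - 2) + w (2 * i - 1)) ∧
      g (w (2 * i - 2) - w (2 * i - 1)) = (σ (a i))⁻¹ • (w (2 * i - 2) - w (2 * i - 1))) ∧
    (∀ v ∈ PadVan E V₀ h l w, g v = v) ∧
    (∀ i : ℕ, 1 ≤ i → i + 1 ≤ (l + 1) / 2 → valE (a (i + 1)) ≤ valE (a i)) ∧
    (1 ≤ (l + 1) / 2 → 0 ≤ valE (a ((l + 1) / 2)))}

/-- The positive chamber `A_H⁺` of the maximal split torus `A_H` of `H`: elements of `H`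
acting by `a'ᵢ` on `u'ᵢ`, by `σ(a'ᵢ)⁻¹` on `u'₋ᵢ`, trivially on `Ew₀ ⊕ W_an`, with
`val_E a'₁ ≥ … ≥ val_E a'_{r₁} ≥ 0`. -/
def PadAH (h : V₀ → V₀ → E) (σ : E → E) (valE : E → ℤ) (l : ℕ) (w : ℕ → V₀) :
    Set (V₀ →L[E] V₀) :=
  {g | g ∈ PadH E V₀ h (w 0) ∧ ∃ a : ℕ → E,
    (∀ i : ℕ, 1 ≤ i → i ≤ l / 2 → a i ≠ 0 ∧
      g (w (2 * i - 1) + w (2 * i)) = a i • (w (2 * i - 1) + w (2 * i)) ∧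
      g (w (2 * i - 1) - w (2 * i)) = (σ (a i))⁻¹ • (w (2 * i - 1) - w (2 * i))) ∧
    (∀ v ∈ PadWan E V₀ h l w, g v = v) ∧
    (∀ i : ℕ, 1 ≤ i → i + 1 ≤ l / 2 → valE (a (i + 1)) ≤ valE (a i)) ∧
    (1 ≤ l / 2 → 0 ≤ valE (a (l / 2)))}

end PadSetup3

section RelativeCartan

/-- A hermitian space `(V, h)` relative to `σ` together with pairwise orthogonal vectors
`w 0, …, w l` with `h (w i) (w i) = (-1) ^ i * ν`. -/
structure HermSetting {E V : Type*} [NontriviallyNormedField E] [NormedAddCommGroup V]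
    [NormedSpace E V] (σ : E ≃+* E) (h : V → V → E) (ν : E) (l : ℕ) (w : ℕ → V) : Prop where
  add_left : ∀ u u' v : V, h (u + u') v = h u v + h u' v
  smul_left : ∀ (a : E) (u v : V), h (a • u) v = a * h u v
  conj : ∀ u v : V, h v u = σ (h u v)
  nondeg : ∀ u : V, (∀ v : V, h u v = 0) → u = 0
  invol : ∀ x : E, σ (σ x) = x
  nontriv : ∃ x : E, σ x ≠ x
  norm_map : ∀ x : E, ‖σ x‖ = ‖x‖
  nu_ne : ν ≠ 0
  map_nu : σ ν = ν
  orth : ∀ i ≤ l, ∀ j ≤ l, i ≠ j → h (w i) (w j) = 0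
  self : ∀ i ≤ l, h (w i) (w i) = (-1 : E) ^ i * ν

variable {E V : Type*} [NontriviallyNormedField E] [NormedAddCommGroup V] [NormedSpace E V]
variable {σ : E ≃+* E} {h : V → V → E} {ν : E} {l : ℕ} {w : ℕ → V}

namespace HermSetting

theorem add_right (S : HermSetting σ h ν l w) (u v v' : V) :
    h u (v + v') = h u v + h u v' := by
  rw [S.conj (v + v') u, S.add_left, map_add, ← S.conj, ← S.conj]

theorem smul_right (S : HermSetting σ h ν l w) (a : E) (u v : V) :
    h u (a • v) = σ a * h u v := by
  rw [S.conj (a • v) u, S.smul_left, map_mul, ← S.conj]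

theorem zero_left (S : HermSetting σ h ν l w) (v : V) : h 0 v = 0 := by
  simpa using S.smul_left 0 0 v

theorem neg_left (S : HermSetting σ h ν l w) (u v : V) : h (-u) v = -h u v := by
  simpa using S.smul_left (-1) u v

theorem neg_right (S : HermSetting σ h ν l w) (u v : V) : h u (-v) = -h u v := by
  simpa using S.smul_right (-1) u v

theorem sub_left (S : HermSetting σ h ν l w) (u u' v : V) :
    h (u - u') v = h u v - h u' v := by
  rw [sub_eq_add_neg, S.add_left, S.neg_left, sub_eq_add_neg]

theorem sub_right (S : HermSetting σ h ν l w) (u v v' : V) :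
    h u (v - v') = h u v - h u v' := by
  rw [sub_eq_add_neg, S.add_right, S.neg_right, sub_eq_add_neg]

theorem sum_left (S : HermSetting σ h ν l w) {ι : Type*} (s : Finset ι) (f : ι → V) (v : V) :
    h (∑ i ∈ s, f i) v = ∑ i ∈ s, h (f i) v := by
  classical
  induction s using Finset.induction_on with
  | empty => simp [S.zero_left]
  | insert a s ha ih => simp [Finset.sum_insert ha, S.add_left, ih]

theorem orth_symm (S : HermSetting σ h ν l w) {u v : V} (huv : h u v = 0) : h v u = 0 := by
  rw [S.conj u v, huv, map_zero]

theorem norm_symm (S : HermSetting σ h ν l w) (u v : V) : ‖h u v‖ = ‖h v u‖ := by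
  rw [S.conj u v, S.norm_map]

/-- The linear functional `u ↦ h u v`. -/
def functional (S : HermSetting σ h ν l w) (v : V) : V →ₗ[E] E where
  toFun u := h u v
  map_add' u u' := S.add_left u u' v
  map_smul' a u := S.smul_left a u v

@[simp]
theorem functional_apply (S : HermSetting σ h ν l w) (u v : V) : S.functional v u = h u v := rfl

theorem self_ne_zero (S : HermSetting σ h ν l w) {i : ℕ} (hi : i ≤ l) : h (w i) (w i) ≠ 0 := by
  rw [S.self i hi]
  exact mul_ne_zero (pow_ne_zero _ (by simp)) S.nu_ne

theorem map_self (S : HermSetting σ h ν l w) (v : V) : σ (h v v) = h v v := (S.conj v v).symm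

theorem self_succ (S : HermSetting σ h ν l w) {i : ℕ} (hi : i + 1 ≤ l) :
    h (w (i + 1)) (w (i + 1)) = -h (w i) (w i) := by
  rw [S.self _ hi, S.self i (by omega)]; ring

theorem exists_equiv_of_isometry (S : HermSetting σ h ν l w) [FiniteDimensional E V] (f : V → V)
    (hadd : ∀ x y, f (x + y) = f x + f y) (hsmul : ∀ (a : E) x, f (a • x) = a • f x)
    (hf : ∀ x y, h (f x) (f y) = h x y) :
    ∃ g : V ≃ₗ[E] V, ∀ x, g x = f x := by
  let F : V →ₗ[E] V := { toFun := f, map_add' := hadd, map_smul' := hsmul }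
  have hinj : Function.Injective F := by
    rw [← LinearMap.ker_eq_bot, LinearMap.ker_eq_bot']
    intro x hx
    refine S.nondeg x fun v => ?_
    rw [← hf x v, show f x = 0 from hx, S.zero_left]
  exact ⟨LinearEquiv.ofInjectiveEndo F hinj, fun x => by
    rw [LinearEquiv.coe_ofInjectiveEndo]; rfl⟩

end HermSetting

/-- The isometries of `(V, h)` fixing `w i` for all `i < j`. -/
def isometryFixing {σ : E ≃+* E} {h : V → V → E} {ν : E} {l : ℕ} {w : ℕ → V}
    (_ : HermSetting σ h ν l w) (j : ℕ) : Subgroup (V ≃ₗ[E] V) where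
  carrier := {g | (∀ u v, h (g u) (g v) = h u v) ∧ ∀ i < j, g (w i) = w i}
  mul_mem' {a b} ha hb := by
    refine ⟨fun u v => ?_, fun i hi => ?_⟩
    · rw [LinearEquiv.mul_apply, LinearEquiv.mul_apply, ha.1, hb.1]
    · rw [LinearEquiv.mul_apply, hb.2 i hi, ha.2 i hi]
  one_mem' := ⟨fun _ _ => rfl, fun _ _ => rfl⟩
  inv_mem' {a} ha := by
    refine ⟨fun u v => ?_, fun i hi => ?_⟩
    · rw [← ha.1 (a⁻¹ u), ← LinearEquiv.mul_apply, ← LinearEquiv.mul_apply, mul_inv_cancel]; rfl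
    · conv_lhs => rw [← ha.2 i hi]
      rw [← LinearEquiv.mul_apply, inv_mul_cancel]; rfl

namespace HermSetting

theorem fixing_mono (S : HermSetting σ h ν l w) {i j : ℕ} (hij : i ≤ j) :
    isometryFixing S j ≤ isometryFixing S i :=
  fun _ hg => ⟨hg.1, fun k hk => hg.2 k (hk.trans_le hij)⟩

theorem form_inv_left (S : HermSetting σ h ν l w) {j : ℕ} {g : V ≃ₗ[E] V}
    (hg : g ∈ isometryFixing S j) (u v : V) : h (g⁻¹ u) v = h u (g v) := by
  rw [← hg.1 (g⁻¹ u) v, ← LinearEquiv.mul_apply, mul_inv_cancel]; rfl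

/-- An element fixing `w i` for `i < j` preserves the orthogonal complement of these vectors. -/
theorem fixing_apply_orth (S : HermSetting σ h ν l w) {j : ℕ} {g : V ≃ₗ[E] V}
    (hg : g ∈ isometryFixing S j) {i : ℕ} (hi : i < j) (v : V) : h (g v) (w i) = h v (w i) := by
  conv_lhs => rw [← hg.2 i hi]
  exact hg.1 _ _

theorem exists_quasiReflection (S : HermSetting σ h ν l w) [FiniteDimensional E V] {d : V} {c : E}
    (hc : c ≠ 0) (hcd : c + σ c = h d d) {j : ℕ} (hd : ∀ i < j, h d (w i) = 0) :
    ∃ g ∈ isometryFixing S j, ∀ x, g x = x - (h x d * c⁻¹) • d := by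
  have hc' : σ c ≠ 0 := by simpa using hc
  have key : ∀ x y, h (x - (h x d * c⁻¹) • d) (y - (h y d * c⁻¹) • d) = h x y := by
    intro x y
    simp only [S.sub_left, S.sub_right, S.smul_left, S.smul_right, map_mul, map_inv₀, ← hcd]
    rw [← S.conj y d]
    field_simp
    ring
  obtain ⟨g, hg⟩ := S.exists_equiv_of_isometry (fun x => x - (h x d * c⁻¹) • d)
    (fun x y => by rw [S.add_left]; module) (fun a x => by rw [S.smul_left]; module) key
  refine ⟨g, ⟨fun u v => ?_, fun i hi => ?_⟩, hg⟩
  · rw [hg, hg, key]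
  · rw [hg, S.orth_symm (hd i hi)]; simp

/-- The Eichler transformation attached to a vector `u` of nonzero length and an isotropic
vector `y` orthogonal to it. -/
theorem exists_eichler (S : HermSetting σ h ν l w) [FiniteDimensional E V] [CharZero E] {u y : V}
    (hu : h u u ≠ 0) (hy : h y y = 0) (huy : h u y = 0) {j : ℕ}
    (hju : ∀ i < j, h u (w i) = 0) (hjy : ∀ i < j, h y (w i) = 0) :
    ∃ g ∈ isometryFixing S j, ∀ x,
      g x = x + (h u u)⁻¹ • (h x u • y - h x y • u - (2⁻¹ * h x y) • y) := by
  have h2 : σ 2 = 2 := map_ofNat σ 2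
  have key : ∀ x x', h (x + (h u u)⁻¹ • (h x u • y - h x y • u - (2⁻¹ * h x y) • y))
      (x' + (h u u)⁻¹ • (h x' u • y - h x' y • u - (2⁻¹ * h x' y) • y)) = h x x' := by
    intro x x'
    simp only [S.sub_left, S.sub_right, S.smul_left, S.smul_right, S.add_left, S.add_right,
      map_mul, map_inv₀, h2, hy, huy, S.orth_symm huy, S.map_self]
    rw [← S.conj x' u, ← S.conj x' y]
    field_simp
    ring
  obtain ⟨g, hg⟩ := S.exists_equiv_of_isometry
    (fun x => x + (h u u)⁻¹ • (h x u • y - h x y • u - (2⁻¹ * h x y) • y))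
    (fun x y => by simp only [S.add_left]; module)
    (fun a x => by simp only [S.smul_left]; module) key
  refine ⟨g, ⟨fun u v => ?_, fun i hi => ?_⟩, hg⟩
  · rw [hg, hg, key]
  · rw [hg, S.orth_symm (hju i hi), S.orth_symm (hjy i hi)]; simp

end HermSetting

/-- The operator bound `‖g v‖ ≤ M * ‖v‖`. -/
def BoundedBy (M : ℝ) (g : V ≃ₗ[E] V) : Prop := ∀ v, ‖g v‖ ≤ M * ‖v‖

theorem BoundedBy.mono {M N : ℝ} {g : V ≃ₗ[E] V} (hg : BoundedBy M g) (hMN : M ≤ N) :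
    BoundedBy N g :=
  fun v => (hg v).trans (by gcongr)

theorem BoundedBy.mul {M N : ℝ} {f g : V ≃ₗ[E] V} (hf : BoundedBy M f) (hg : BoundedBy N g)
    (hM : 0 ≤ M) : BoundedBy (M * N) (f * g) := fun v => by
  rw [LinearEquiv.mul_apply, mul_assoc]
  exact (hf _).trans (by gcongr; exact hg v)

theorem boundedBy_one : BoundedBy 1 (1 : V ≃ₗ[E] V) := fun v => by simp

theorem exists_boundedBy [CompleteSpace E] [FiniteDimensional E V] (g : V ≃ₗ[E] V) :
    ∃ M, 0 < M ∧ BoundedBy M g := by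
  refine ⟨‖LinearMap.toContinuousLinearMap (g : V →ₗ[E] V)‖ + 1, by positivity, fun v => ?_⟩
  refine ((LinearMap.toContinuousLinearMap (g : V →ₗ[E] V)).le_opNorm v).trans ?_
  gcongr
  linarith

/-- The coordinate sup norm is an ultrametric gauge equivalent to the given norm. -/
theorem exists_ultrametric_gauge [CompleteSpace E] [FiniteDimensional E V]
    (hna : ∀ x y : E, ‖x + y‖ ≤ max ‖x‖ ‖y‖) :
    ∃ (N : V → ℝ) (C : ℝ), 0 < C ∧ (∀ u v, N (u + v) ≤ max (N u) (N v)) ∧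
      (∀ v, N v ≤ C * ‖v‖) ∧ ∀ v, ‖v‖ ≤ C * N v := by
  let e := (Module.finBasis E V).equivFunL
  refine ⟨fun v => ‖e v‖, ‖(e : V →L[E] (Fin (Module.finrank E V) → E))‖ +
      ‖(e.symm : (Fin (Module.finrank E V) → E) →L[E] V)‖ + 1,
    by positivity, fun u v => ?_, fun v => ?_, fun v => ?_⟩
  · change ‖e (u + v)‖ ≤ max ‖e u‖ ‖e v‖
    rw [map_add]
    refine (pi_norm_le_iff_of_nonneg (by positivity)).2 fun i => ?_
    exact (hna _ _).trans (max_le_max (norm_le_pi_norm _ i) (norm_le_pi_norm _ i))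
  · refine ((e : V →L[E] (Fin (Module.finrank E V) → E)).le_opNorm v).trans ?_
    gcongr
    linarith [norm_nonneg (e.symm : (Fin (Module.finrank E V) → E) →L[E] V)]
  · have := (e.symm : (Fin (Module.finrank E V) → E) →L[E] V).le_opNorm (e v)
    simp only [ContinuousLinearEquiv.coe_coe, ContinuousLinearEquiv.symm_apply_apply] at this
    refine this.trans ?_
    gcongr
    linarith [norm_nonneg (e : V →L[E] (Fin (Module.finrank E V) → E))]

namespace HermSetting

theorem exists_norm_form_le (S : HermSetting σ h ν l w) [CompleteSpace E]
    [FiniteDimensional E V] : ∃ C, 0 < C ∧ ∀ u v, ‖h u v‖ ≤ C * ‖u‖ * ‖v‖ := by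
  let b := Module.finBasis E V
  let Φ : V →L[E] (Fin (Module.finrank E V) → E) := LinearMap.toContinuousLinearMap
    (LinearMap.pi fun i => S.functional (b i))
  let e : V →L[E] (Fin (Module.finrank E V) → E) := b.equivFunL
  refine ⟨(Module.finrank E V) * ‖e‖ * ‖Φ‖ + 1, by positivity, fun u v => ?_⟩
  rw [S.norm_symm]
  have hv : h v u = ∑ i, e v i * h (b i) u := by
    conv_lhs => rw [← b.sum_equivFun v]
    rw [S.sum_left]
    simp only [S.smul_left]
    rfl
  have hterm : ∀ i, ‖e v i * h (b i) u‖ ≤ ‖e‖ * ‖v‖ * (‖Φ‖ * ‖u‖) := by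
    intro i
    rw [norm_mul, S.norm_symm]
    gcongr
    · exact (norm_le_pi_norm _ i).trans (e.le_opNorm v)
    · exact (norm_le_pi_norm (Φ u) i).trans (Φ.le_opNorm u)
  rw [hv]
  refine (norm_sum_le _ _).trans ((Finset.sum_le_sum fun i _ => hterm i).trans ?_)
  rw [Finset.sum_const, Finset.card_univ, Fintype.card_fin, nsmul_eq_mul]
  nlinarith [mul_nonneg (norm_nonneg u) (norm_nonneg v)]

theorem exists_norm_le_of_form_le (S : HermSetting σ h ν l w) [CompleteSpace E]
    [FiniteDimensional E V] :
    ∃ C, 0 < C ∧ ∀ v B, 0 ≤ B → (∀ z, ‖h v z‖ ≤ B * ‖z‖) → ‖v‖ ≤ C * B := by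
  let b := Module.finBasis E V
  let Φ : V →ₗ[E] (Fin (Module.finrank E V) → E) := LinearMap.pi fun i => S.functional (b i)
  have hker : LinearMap.ker Φ = ⊥ := by
    rw [LinearMap.ker_eq_bot']
    intro v hv
    refine S.nondeg v fun z => ?_
    have : S.functional v = 0 := b.ext fun i => by
      simpa using S.orth_symm (show h v (b i) = 0 from congrFun hv i)
    exact S.orth_symm (by rw [← S.functional_apply, this]; rfl)
  obtain ⟨K, hK, hΦ⟩ := Φ.exists_antilipschitzWith hker
  have hΦ' := fun v => hΦ.le_mul_dist v 0
  simp only [map_zero, dist_zero_right] at hΦ'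
  refine ⟨K * (∑ i, ‖b i‖ + 1), by positivity, fun v B hB hv => (hΦ' v).trans ?_⟩
  rw [mul_assoc]
  gcongr
  refine (pi_norm_le_iff_of_nonneg (by positivity)).2 fun i => (hv (b i)).trans ?_
  rw [mul_comm]
  gcongr
  have := Finset.single_le_sum (f := fun i => ‖b i‖) (fun i _ => norm_nonneg _) (Finset.mem_univ i)
  linarith

theorem exists_boundedBy_inv (S : HermSetting σ h ν l w) [CompleteSpace E]
    [FiniteDimensional E V] :
    ∃ C, 0 < C ∧ ∀ g ∈ isometryFixing S 0, ∀ M, 0 ≤ M → BoundedBy M g →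
      BoundedBy (C * M) g⁻¹ := by
  obtain ⟨C, hC, hCv⟩ := S.exists_norm_le_of_form_le
  obtain ⟨D, hD, hDv⟩ := S.exists_norm_form_le
  refine ⟨C * D, by positivity, fun g hg M hM hgM v => ?_⟩
  have := hCv (g⁻¹ v) (D * ‖v‖ * M) (by positivity) fun z => by
    rw [S.form_inv_left hg]
    refine (hDv _ _).trans ?_
    rw [mul_assoc (D * ‖v‖)]
    gcongr
    exact hgM z
  linarith

/-- A quasi-reflection moving `v` to `v'`, with an explicit bound. -/
theorem exists_isometry_apply_eq (S : HermSetting σ h ν l w) [FiniteDimensional E V] {C : ℝ}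
    (hC : ∀ u v, ‖h u v‖ ≤ C * ‖u‖ * ‖v‖) {j : ℕ} {v v' : V} (hvv : h v v = h v' v')
    (hv : ∀ i < j, h v (w i) = 0) (hv' : ∀ i < j, h v' (w i) = 0) (hc : h v (v - v') ≠ 0) :
    ∃ k ∈ isometryFixing S j, k v = v' ∧
      BoundedBy (1 + C * ‖v - v'‖ ^ 2 / ‖h v (v - v')‖) k := by
  obtain ⟨k, hk, hkx⟩ := S.exists_quasiReflection (d := v - v') (j := j) hc
    (by
      rw [← S.conj v (v - v')]
      simp only [S.sub_left, S.sub_right, hvv]; ring)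
    (fun i hi => by rw [S.sub_left, hv i hi, hv' i hi, sub_zero])
  refine ⟨k, hk, by rw [hkx, mul_inv_cancel₀ hc]; simp, fun x => ?_⟩
  rw [hkx]
  refine (norm_sub_le _ _).trans ?_
  rw [add_mul, one_mul, norm_smul, norm_mul, norm_inv]
  refine add_le_add le_rfl ?_
  have hpos : 0 < ‖h v (v - v')‖ := norm_pos_iff.2 hc
  calc ‖h x (v - v')‖ * ‖h v (v - v')‖⁻¹ * ‖v - v'‖
      ≤ (C * ‖x‖ * ‖v - v'‖) * ‖h v (v - v')‖⁻¹ * ‖v - v'‖ := by gcongr; exact hC _ _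
    _ = C * ‖v - v'‖ ^ 2 / ‖h v (v - v')‖ * ‖x‖ := by ring

/-- The orthogonal projection onto the span of `w i`, `i < j`. -/
def headProj (_ : HermSetting σ h ν l w) (j : ℕ) (v : V) : V :=
  ∑ i ∈ Finset.range j, (h v (w i) / h (w i) (w i)) • w i

theorem sub_headProj_orth (S : HermSetting σ h ν l w) {j : ℕ} (hj : j ≤ l + 1) (v : V) {i : ℕ}
    (hi : i < j) : h (v - S.headProj j v) (w i) = 0 := by
  rw [S.sub_left, headProj, S.sum_left, Finset.sum_eq_single i, S.smul_left,
    div_mul_cancel₀ _ (S.self_ne_zero (by omega)), sub_self]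
  · intro k hk hki
    rw [Finset.mem_range] at hk
    rw [S.smul_left, S.orth k (by omega) i (by omega) hki, mul_zero]
  · exact fun hi' => absurd (Finset.mem_range.2 hi) hi'

/-- A vector orthogonal to `w i` for `i < j` and to the complement of these vectors vanishes. -/
theorem eq_zero_of_orth (S : HermSetting σ h ν l w) {j : ℕ} (hj : j ≤ l + 1) {v : V}
    (hv : ∀ i < j, h v (w i) = 0) (hv' : ∀ z, (∀ i < j, h z (w i) = 0) → h v z = 0) : v = 0 := by
  refine S.nondeg v fun z => ?_
  have hvp : h (S.headProj j z) v = 0 := by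
    rw [headProj, S.sum_left]
    refine Finset.sum_eq_zero fun i hi => ?_
    rw [S.smul_left, S.orth_symm (hv i (Finset.mem_range.1 hi)), mul_zero]
  have hz := hv' _ fun i hi => S.sub_headProj_orth hj z hi
  rwa [S.sub_right, S.orth_symm hvp, sub_zero] at hz

/-- Up to isometries from a bounded set, the pairing of `v` with an isotropic vector `e` of a
hyperbolic pair is comparable with the norm of `v`. -/
theorem exists_bounded_pairing (S : HermSetting σ h ν l w) [CompleteSpace E] [CharZero E]
    [FiniteDimensional E V] {j : ℕ} (hj : j ≤ l + 1) {e f : V}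
    (hf : ∀ i < j, h f (w i) = 0) (hef : h e f ≠ 0) :
    ∃ M δ : ℝ, 0 < M ∧ 0 < δ ∧ ∀ v, (∀ i < j, h v (w i) = 0) →
      ∃ k ∈ isometryFixing S j, BoundedBy M k ∧ δ * ‖v‖ ≤ ‖h (k v) e‖ := by
  let D : Set V := {x | ∃ k ∈ isometryFixing S j, x = k e}
  have hdspan : ∀ d, (∀ i < j, h d (w i) = 0) → h e d ≠ 0 → d ∈ Submodule.span E D := by
    intro d hd hed
    obtain ⟨c, hc, hcd⟩ : ∃ c : E, c ≠ 0 ∧ c + σ c = h d d := by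
      by_cases hdd : h d d = 0
      · obtain ⟨x, hx⟩ := S.nontriv
        refine ⟨σ x - x, sub_ne_zero.2 hx, ?_⟩
        rw [map_sub, S.invol, hdd]; ring
      · refine ⟨h d d / 2, div_ne_zero hdd two_ne_zero, ?_⟩
        rw [map_div₀, S.map_self, map_ofNat]; ring
    obtain ⟨g, hg, hgx⟩ := S.exists_quasiReflection hc hcd hd
    have h1 : e ∈ Submodule.span E D := Submodule.subset_span ⟨1, one_mem _, rfl⟩
    have h2 : g e ∈ Submodule.span E D := Submodule.subset_span ⟨g, hg, rfl⟩
    have h3 : (h e d * c⁻¹)⁻¹ • (e - g e) ∈ Submodule.span E D :=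
      Submodule.smul_mem _ _ (Submodule.sub_mem _ h1 h2)
    rwa [hgx, sub_sub_cancel, smul_smul, inv_mul_cancel₀ (mul_ne_zero hed (inv_ne_zero hc)),
      one_smul] at h3
  have hspan : ∀ d, (∀ i < j, h d (w i) = 0) → d ∈ Submodule.span E D := by
    intro d hd
    by_cases hed : h e d = 0
    · have h1 := hdspan (d + f) (fun i hi => by rw [S.add_left, hd i hi, hf i hi, add_zero])
        (by rwa [S.add_right, hed, zero_add])
      simpa using Submodule.sub_mem _ h1 (hdspan f hf hef)
    · exact hdspan d hd hed
  obtain ⟨b, hbD, hbspan, hbli⟩ := exists_linearIndependent E D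
  have : Finite b := hbli.setFinite
  have := Fintype.ofFinite b
  choose k hk hkx using fun x : b => hbD x.2
  choose M hM hkM using fun x : b => exists_boundedBy (k x)⁻¹
  let U : Submodule E V :=
    { carrier := {v | ∀ i < j, h v (w i) = 0}
      add_mem' := fun hu hv i hi => by rw [S.add_left, hu i hi, hv i hi, add_zero]
      zero_mem' := fun i _ => S.zero_left _
      smul_mem' := fun a v hv i hi => by rw [S.smul_left, hv i hi, mul_zero] }
  let Φ : U →ₗ[E] (b → E) := (LinearMap.pi fun x : b => S.functional (x : V)) ∘ₗ U.subtype
  have hker : LinearMap.ker Φ = ⊥ := by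
    rw [LinearMap.ker_eq_bot']
    rintro ⟨v, hv⟩ hΦ
    refine Subtype.ext (S.eq_zero_of_orth hj hv fun z hz => S.orth_symm ?_)
    have hle : Submodule.span E b ≤ LinearMap.ker (S.functional v) :=
      Submodule.span_le.2 fun x hx => S.orth_symm (congrFun hΦ ⟨x, hx⟩)
    exact hle (hbspan ▸ hspan z hz)
  obtain ⟨K, hK, hΦ⟩ := Φ.exists_antilipschitzWith hker
  have hK' : (0 : ℝ) < K := hK
  refine ⟨∑ x, M x + 1, (2 * K)⁻¹,
    by linarith [Finset.sum_nonneg fun x (_ : x ∈ Finset.univ) => (hM x).le], by positivity,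
    fun v hv => ?_⟩
  by_cases hv0 : v = 0
  · exact ⟨1, one_mem _, boundedBy_one.mono (by
      have := Finset.sum_nonneg fun x (_ : x ∈ Finset.univ) => (hM x).le
      linarith), by simp [hv0]⟩
  have hvpos : 0 < ‖v‖ := norm_pos_iff.2 hv0
  have hΦv := hΦ.le_mul_dist ⟨v, hv⟩ 0
  rw [map_zero, dist_zero_right, dist_zero_right] at hΦv
  obtain ⟨x, hx⟩ : ∃ x : b, (2 * (K : ℝ))⁻¹ * ‖v‖ < ‖h v x‖ := by
    by_contra! hcon
    have := (pi_norm_le_iff_of_nonneg (x := Φ ⟨v, hv⟩) (by positivity)).2 hcon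
    have h1 : ‖v‖ ≤ K * ((2 * (K : ℝ))⁻¹ * ‖v‖) := hΦv.trans (by gcongr)
    have h2 : K * ((2 * (K : ℝ))⁻¹ * ‖v‖) = ‖v‖ / 2 := by field_simp
    linarith
  refine ⟨(k x)⁻¹, inv_mem (hk x), (hkM x).mono ?_, ?_⟩
  · have := Finset.single_le_sum (f := M) (fun i _ => (hM i).le) (Finset.mem_univ x)
    linarith
  · rw [S.form_inv_left (hk x), ← hkx x]
    exact hx.le

end HermSetting

namespace HermSetting

theorem continuous_form (S : HermSetting σ h ν l w) [CompleteSpace E] [FiniteDimensional E V] :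
    Continuous fun p : V × V => h p.1 p.2 := by
  let b := Module.finBasis E V
  have hv : (fun p : V × V => h p.1 p.2) =
      fun p => ∑ i, b.equivFunL p.1 i * σ (S.functional (b i) p.2) := by
    funext p
    conv_lhs => enter [1]; rw [← b.sum_equivFun p.1]
    rw [S.sum_left]
    simp only [S.smul_left, S.functional_apply, ← S.conj]
    rfl
  have hσ : Continuous σ :=
    (AddMonoidHomClass.isometry_of_norm σ S.norm_map).continuous
  have hb : ∀ i, Continuous (S.functional (b i)) :=
    fun i => LinearMap.continuous_of_finiteDimensional _
  rw [hv]
  refine continuous_finsetSum _ fun i _ =>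
    Continuous.mul ?_ (hσ.comp ((hb i).comp continuous_snd))
  exact (continuous_apply i).comp (b.equivFunL.continuous.comp continuous_fst)

theorem exists_norm_sq_le (S : HermSetting σ h ν l w) [CompleteSpace E] [ProperSpace E]
    [FiniteDimensional E V] {j : ℕ}
    (haniso : ∀ v, (∀ i < j, h v (w i) = 0) → v ≠ 0 → h v v ≠ 0) :
    ∃ c, 0 < c ∧ ∀ v, (∀ i < j, h v (w i) = 0) → c * ‖v‖ ^ 2 ≤ ‖h v v‖ := by
  have : ProperSpace V := FiniteDimensional.proper E V
  obtain ⟨r, hr⟩ := NormedField.exists_one_lt_norm E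
  have hr0 : 0 < ‖r‖ := by linarith
  let A : Set V := Metric.closedBall 0 1 ∩
    ({v | 1 / ‖r‖ ≤ ‖v‖} ∩ ⋂ i ∈ Finset.range j, {v | S.functional (w i) v = 0})
  have hA : IsCompact A := by
    refine (isCompact_closedBall 0 1).inter_right (IsClosed.inter ?_ ?_)
    · exact isClosed_le continuous_const continuous_norm
    · exact isClosed_biInter fun i _ => isClosed_eq
        (LinearMap.continuous_of_finiteDimensional _) continuous_const
  obtain ⟨c, hc, hcA⟩ : ∃ c, 0 < c ∧ ∀ v ∈ A, c ≤ ‖h v v‖ := by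
    refine hA.exists_forall_le' (S.continuous_form.comp
      (continuous_id.prodMk continuous_id)).norm.continuousOn fun v hv => norm_pos_iff.2 ?_
    refine haniso v (fun i hi => ?_) ?_
    · simpa using Set.mem_iInter₂.1 hv.2.2 i (Finset.mem_range.2 hi)
    · rintro rfl
      have h1 : 1 / ‖r‖ ≤ ‖(0 : V)‖ := hv.2.1
      rw [norm_zero] at h1
      have : 0 < 1 / ‖r‖ := by positivity
      linarith
  refine ⟨c, hc, fun v hv => ?_⟩
  by_cases hv0 : v = 0
  · simp [hv0]
  obtain ⟨d, _, hd1, hd2, -⟩ := rescale_to_shell hr one_pos hv0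
  have hdA : d • v ∈ A := by
    refine ⟨by simpa using hd1.le, hd2, Set.mem_iInter₂.2 fun i hi => ?_⟩
    simp [S.smul_left, hv i (Finset.mem_range.1 hi)]
  have h1 := hcA _ hdA
  rw [S.smul_left, S.smul_right, norm_mul, norm_mul, S.norm_map] at h1
  rw [norm_smul] at hd1
  have h2 : (‖d‖ * ‖v‖) ^ 2 ≤ 1 := by
    rw [sq_le_one_iff_abs_le_one, abs_of_nonneg (by positivity)]; exact hd1.le
  calc c * ‖v‖ ^ 2 ≤ (‖d‖ * (‖d‖ * ‖h v v‖)) * ‖v‖ ^ 2 := by gcongr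
    _ = (‖d‖ * ‖v‖) ^ 2 * ‖h v v‖ := by ring
    _ ≤ 1 * ‖h v v‖ := by gcongr
    _ = ‖h v v‖ := one_mul _

/-- The isometry group of an anisotropic space is bounded. -/
theorem exists_bound_of_anisotropic (S : HermSetting σ h ν l w) [CompleteSpace E] [ProperSpace E]
    [FiniteDimensional E V] {j : ℕ} (hj : j ≤ l + 1)
    (haniso : ∀ v, (∀ i < j, h v (w i) = 0) → v ≠ 0 → h v v ≠ 0) :
    ∃ M, 0 < M ∧ ∀ g ∈ isometryFixing S j, BoundedBy M g := by
  obtain ⟨c, hc, hcv⟩ := S.exists_norm_sq_le haniso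
  obtain ⟨C, hC, hCv⟩ := S.exists_norm_form_le
  set P := ∑ i ∈ Finset.range j, C * ‖w i‖ / ‖h (w i) (w i)‖ * ‖w i‖ with hP
  have hP0 : 0 ≤ P := Finset.sum_nonneg fun i _ => by positivity
  have hproj : ∀ v, ‖S.headProj j v‖ ≤ P * ‖v‖ := by
    intro v
    rw [hP, Finset.sum_mul]
    refine norm_sum_le_of_le _ fun i _ => ?_
    rw [norm_smul, norm_div]
    calc ‖h v (w i)‖ / ‖h (w i) (w i)‖ * ‖w i‖
        ≤ (C * ‖v‖ * ‖w i‖) / ‖h (w i) (w i)‖ * ‖w i‖ := by gcongr; exact hCv _ _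
      _ = C * ‖w i‖ / ‖h (w i) (w i)‖ * ‖w i‖ * ‖v‖ := by ring
  refine ⟨Real.sqrt (C / c) * (1 + P) + P + 1, by positivity, fun g hg v => ?_⟩
  have hgp : g (S.headProj j v) = S.headProj j v := by
    rw [headProj, map_sum]
    refine Finset.sum_congr rfl fun i hi => ?_
    rw [map_smul, hg.2 i (Finset.mem_range.1 hi)]
  have hgz : ‖g (v - S.headProj j v)‖ ≤ Real.sqrt (C / c) * ‖v - S.headProj j v‖ := by
    set z := v - S.headProj j v with hz
    have horth : ∀ i < j, h (g z) (w i) = 0 := fun i hi => by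
      rw [S.fixing_apply_orth hg hi]; exact S.sub_headProj_orth hj v hi
    have h1 : c * ‖g z‖ ^ 2 ≤ C * ‖z‖ ^ 2 := by
      refine (hcv _ horth).trans ?_
      rw [hg.1]
      exact (hCv z z).trans (by rw [mul_assoc, ← pow_two])
    rw [← abs_of_nonneg (norm_nonneg (g z)), ← Real.sqrt_sq_eq_abs]
    calc Real.sqrt (‖g z‖ ^ 2) ≤ Real.sqrt (C / c * ‖z‖ ^ 2) := by
          apply Real.sqrt_le_sqrt
          rw [div_mul_eq_mul_div, le_div_iff₀ hc]; linarith
      _ = Real.sqrt (C / c) * ‖z‖ := by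
          rw [Real.sqrt_mul (by positivity), Real.sqrt_sq (norm_nonneg z)]
  have hz : ‖v - S.headProj j v‖ ≤ (1 + P) * ‖v‖ := by
    have := norm_sub_le v (S.headProj j v)
    linarith [hproj v]
  calc ‖g v‖ = ‖g (v - S.headProj j v) + S.headProj j v‖ := by
        conv_rhs => enter [1, 2]; rw [← hgp]
        rw [← map_add, sub_add_cancel]
    _ ≤ Real.sqrt (C / c) * ((1 + P) * ‖v‖) + P * ‖v‖ :=
        (norm_add_le _ _).trans (add_le_add (hgz.trans (by gcongr)) (hproj v))
    _ ≤ _ := by linarith [norm_nonneg v]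

end HermSetting

/-- `t` acts by `α` on `w j + w (j + 1)`, by `(σ α)⁻¹` on `w j - w (j + 1)`, and trivially on the
orthogonal complement of these two vectors. -/
def IsRankOneTorus {σ : E ≃+* E} {h : V → V → E} {ν : E} {l : ℕ} {w : ℕ → V}
    (_ : HermSetting σ h ν l w) (j : ℕ) (α : E) (t : V ≃ₗ[E] V) : Prop :=
  ∀ x, t x = x +
    ((α - 1) * h x (w j - w (j + 1)) / (2 * h (w j) (w j))) • (w j + w (j + 1)) +
    (((σ α)⁻¹ - 1) * h x (w j + w (j + 1)) / (2 * h (w j) (w j))) • (w j - w (j + 1))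

namespace HermSetting

theorem plus_plus (S : HermSetting σ h ν l w) {j : ℕ} (hj : j + 1 ≤ l) :
    h (w j + w (j + 1)) (w j + w (j + 1)) = 0 := by
  simp only [S.add_left, S.add_right, S.orth j (by omega) (j + 1) hj (by omega),
    S.orth (j + 1) hj j (by omega) (by omega), S.self_succ hj]
  ring

theorem minus_minus (S : HermSetting σ h ν l w) {j : ℕ} (hj : j + 1 ≤ l) :
    h (w j - w (j + 1)) (w j - w (j + 1)) = 0 := by
  simp only [S.sub_left, S.sub_right, S.orth j (by omega) (j + 1) hj (by omega),
    S.orth (j + 1) hj j (by omega) (by omega), S.self_succ hj]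
  ring

theorem plus_minus (S : HermSetting σ h ν l w) {j : ℕ} (hj : j + 1 ≤ l) :
    h (w j + w (j + 1)) (w j - w (j + 1)) = 2 * h (w j) (w j) := by
  simp only [S.add_left, S.sub_right, S.orth j (by omega) (j + 1) hj (by omega),
    S.orth (j + 1) hj j (by omega) (by omega), S.self_succ hj]
  ring

theorem minus_plus (S : HermSetting σ h ν l w) {j : ℕ} (hj : j + 1 ≤ l) :
    h (w j - w (j + 1)) (w j + w (j + 1)) = 2 * h (w j) (w j) := by
  rw [S.conj (w j + w (j + 1)), S.plus_minus hj, map_mul, map_ofNat, S.map_self]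

theorem exists_rankOneTorus (S : HermSetting σ h ν l w) [CharZero E]
    [FiniteDimensional E V] {j : ℕ} (hj : j + 1 ≤ l) {α : E} (hα : α ≠ 0) :
    ∃ t ∈ isometryFixing S j, IsRankOneTorus S j α t := by
  have hσα : σ α ≠ 0 := by simpa using hα
  have hν : h (w j) (w j) ≠ 0 := S.self_ne_zero (by omega)
  have h2 : σ 2 = 2 := map_ofNat σ 2
  let T : V → V := fun x => x +
    ((α - 1) * h x (w j - w (j + 1)) / (2 * h (w j) (w j))) • (w j + w (j + 1)) +
    (((σ α)⁻¹ - 1) * h x (w j + w (j + 1)) / (2 * h (w j) (w j))) • (w j - w (j + 1))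
  have key : ∀ x y, h (T x) (T y) = h x y := by
    intro x y
    have hp := S.plus_plus hj
    have hm := S.minus_minus hj
    have hpm := S.plus_minus hj
    have hmp := S.minus_plus hj
    simp only [T]
    generalize w j + w (j + 1) = p at *
    generalize w j - w (j + 1) = q at *
    simp only [S.add_left, S.add_right, S.smul_left, S.smul_right, hp, hm, hpm, hmp, map_mul,
      map_div₀, map_sub, map_one, map_inv₀, S.invol, S.map_self, h2]
    rw [← S.conj y p, ← S.conj y q]
    field_simp
    ring
  obtain ⟨t, ht⟩ := S.exists_equiv_of_isometry T
    (fun x y => by simp only [T, S.add_left, mul_add, add_div, add_smul]; abel)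
    (fun a x => by simp only [T, S.smul_left]; module) key
  refine ⟨t, ⟨fun u v => by rw [ht, ht, key], fun i hi => ?_⟩, ht⟩
  rw [ht]
  simp [T, S.sub_right, S.add_right, S.orth i (by omega) j (by omega) (by omega),
    S.orth i (by omega) (j + 1) hj (by omega)]

end HermSetting

namespace IsRankOneTorus

variable {S : HermSetting σ h ν l w} {j : ℕ} {α β : E} {s t : V ≃ₗ[E] V}

theorem apply_plus [CharZero E] (ht : IsRankOneTorus S j α t) (hj : j + 1 ≤ l) :
    t (w j + w (j + 1)) = α • (w j + w (j + 1)) := by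
  have hν : h (w j) (w j) ≠ 0 := S.self_ne_zero (by omega)
  rw [ht, S.plus_plus hj, S.plus_minus hj, mul_div_cancel_right₀ _ (by simpa using hν)]
  module

theorem apply_minus [CharZero E] (ht : IsRankOneTorus S j α t) (hj : j + 1 ≤ l) :
    t (w j - w (j + 1)) = (σ α)⁻¹ • (w j - w (j + 1)) := by
  have hν : h (w j) (w j) ≠ 0 := S.self_ne_zero (by omega)
  rw [ht, S.minus_minus hj, S.minus_plus hj, mul_div_cancel_right₀ _ (by simpa using hν)]
  module

theorem apply_of_orth (ht : IsRankOneTorus S j α t) {x : V} (hx : h x (w j) = 0)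
    (hx' : h x (w (j + 1)) = 0) : t x = x := by
  rw [ht, S.sub_right, S.add_right, hx, hx']
  simp

theorem mul [CharZero E] (hs : IsRankOneTorus S j α s) (ht : IsRankOneTorus S j β t)
    (hj : j + 1 ≤ l) :
    IsRankOneTorus S j (α * β) (s * t) := by
  intro x
  rw [LinearEquiv.mul_apply, ht, map_add, map_add, map_smul, map_smul, hs.apply_plus hj,
    hs.apply_minus hj, hs x, map_mul, mul_inv]
  module

theorem eq_one (ht : IsRankOneTorus S j 1 t) : t = 1 := by
  ext x
  rw [ht]
  simp

theorem inv [CharZero E] [FiniteDimensional E V] (ht : IsRankOneTorus S j α t)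
    (hj : j + 1 ≤ l) (hα : α ≠ 0) :
    IsRankOneTorus S j α⁻¹ t⁻¹ := by
  obtain ⟨s, -, hs⟩ := S.exists_rankOneTorus hj (inv_ne_zero hα)
  have hst := hs.mul ht hj
  rw [inv_mul_cancel₀ hα] at hst
  rwa [← eq_inv_of_mul_eq_one_left hst.eq_one]

theorem comm_of_fixing (ht : IsRankOneTorus S j α t) {k : V ≃ₗ[E] V}
    (hk : k ∈ isometryFixing S (j + 2)) : k * t = t * k := by
  ext x
  have h0 := hk.2 j (by omega)
  have h1 := hk.2 (j + 1) (by omega)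
  rw [LinearEquiv.mul_apply, LinearEquiv.mul_apply, ht, ht]
  simp only [map_add, map_sub, map_smul, h0, h1, S.sub_right, S.add_right,
    S.fixing_apply_orth hk (show j < j + 2 by omega),
    S.fixing_apply_orth hk (show j + 1 < j + 2 by omega)]

end IsRankOneTorus

/-- Rank one torus elements with eigenvalues in a bounded range are uniformly bounded. -/
theorem HermSetting.exists_bound_rankOneTorus (S : HermSetting σ h ν l w) [CompleteSpace E]
    [FiniteDimensional E V] (j : ℕ) :
    ∃ C, 0 < C ∧ ∀ (B : ℝ) (α : E) (t : V ≃ₗ[E] V), IsRankOneTorus S j α t → 0 ≤ B → ‖α‖ ≤ B →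
      ‖α⁻¹‖ ≤ B → BoundedBy (C * (B + 1)) t := by
  obtain ⟨C, hC, hCv⟩ := S.exists_norm_form_le
  set p := w j + w (j + 1) with hp
  set q := w j - w (j + 1) with hq
  refine ⟨1 + 2 * (C * ‖q‖ * ‖p‖ / ‖2 * h (w j) (w j)‖), by positivity,
    fun B α t ht hB hα hα' x => ?_⟩
  set D := ‖2 * h (w j) (w j)‖
  have h1 : ‖α - 1‖ ≤ B + 1 := (norm_sub_le _ _).trans (by rw [norm_one]; gcongr)
  have h2 : ‖(σ α)⁻¹ - 1‖ ≤ B + 1 := by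
    refine (norm_sub_le _ _).trans ?_
    rw [norm_one, norm_inv, S.norm_map, ← norm_inv]; gcongr
  rw [ht, ← hp, ← hq]
  refine (norm_add₃_le).trans ?_
  rw [norm_smul, norm_smul, norm_div, norm_div, norm_mul, norm_mul _ (h x p)]
  calc ‖x‖ + ‖α - 1‖ * ‖h x q‖ / D * ‖p‖ + ‖(σ α)⁻¹ - 1‖ * ‖h x p‖ / D * ‖q‖
      ≤ ‖x‖ + (B + 1) * (C * ‖x‖ * ‖q‖) / D * ‖p‖ +
        (B + 1) * (C * ‖x‖ * ‖p‖) / D * ‖q‖ := by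
        gcongr
        · exact hCv _ _
        · exact hCv _ _
    _ = ‖x‖ + 2 * (C * ‖q‖ * ‖p‖ / D) * (B + 1) * ‖x‖ := by ring
    _ ≤ _ := by nlinarith [mul_nonneg hB (norm_nonneg x)]

/-- `t` is the element of the split torus on the pairs `w (j + 2 * i) ± w (j + 2 * i + 1)` whose
eigenvalues are the powers `π ^ m i` of `π`. -/
structure IsTorus {σ : E ≃+* E} {h : V → V → E} {ν : E} {l : ℕ} {w : ℕ → V}
    (S : HermSetting σ h ν l w) (π : E) (j : ℕ) (m : ℕ → ℤ) (t : V ≃ₗ[E] V) : Prop where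
  mem : t ∈ isometryFixing S j
  plus : ∀ i, j + 2 * i + 1 ≤ l → t (w (j + 2 * i) + w (j + 2 * i + 1)) =
    π ^ m i • (w (j + 2 * i) + w (j + 2 * i + 1))
  minus : ∀ i, j + 2 * i + 1 ≤ l → t (w (j + 2 * i) - w (j + 2 * i + 1)) =
    (σ (π ^ m i))⁻¹ • (w (j + 2 * i) - w (j + 2 * i + 1))
  fix : ∀ v, (∀ i, j + 2 * i + 1 ≤ l → h v (w (j + 2 * i)) = 0 ∧ h v (w (j + 2 * i + 1)) = 0) →
    t v = v

namespace IsTorus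

variable {S : HermSetting σ h ν l w} {j : ℕ} {π : E} {m : ℕ → ℤ} {a t : V ≃ₗ[E] V}

theorem one (hj : l < j + 1) : IsTorus S π j m 1 where
  mem := one_mem _
  plus i hi := absurd hi (by omega)
  minus i hi := absurd hi (by omega)
  fix _ _ := rfl

theorem apply_inv_eq {g : V ≃ₗ[E] V} {c : E} (hc : c ≠ 0) {v : V} (hv : g v = c • v) :
    g⁻¹ v = c⁻¹ • v := by
  have : g (c⁻¹ • v) = v := by rw [map_smul, hv, smul_smul, inv_mul_cancel₀ hc, one_smul]
  conv_lhs => rw [← this]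
  rw [← LinearEquiv.mul_apply, inv_mul_cancel]; rfl

theorem inv (ht : IsTorus S π j m t) (hπ : π ≠ 0) : IsTorus S π j (fun i => -m i) t⁻¹ where
  mem := inv_mem ht.mem
  plus i hi := by
    rw [zpow_neg]
    exact apply_inv_eq (zpow_ne_zero _ hπ) (ht.plus i hi)
  minus i hi := by
    rw [zpow_neg, map_inv₀]
    exact apply_inv_eq (inv_ne_zero ((map_ne_zero σ).2 (zpow_ne_zero _ hπ))) (ht.minus i hi)
  fix v hv := by
    conv_lhs => rw [← ht.fix v hv]
    rw [← LinearEquiv.mul_apply, inv_mul_cancel]; rfl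

/-- A vector `w i` of index below the range of the torus is fixed by it. -/
theorem apply_eq_self (ht : IsTorus S π j m t) {i : ℕ} (hi : i < j) : t (w i) = w i :=
  ht.mem.2 i hi

/-- Extending a torus element by one pair. -/
theorem cons [CharZero E] (ht : IsTorus S π (j + 2) m t) {n : ℤ}
    (ha : IsRankOneTorus S j (π ^ n) a) (haj : a ∈ isometryFixing S j) (hj : j + 1 ≤ l) :
    IsTorus S π j (fun i => Nat.casesOn i n m) (t * a) where
  mem := mul_mem (S.fixing_mono (by omega) ht.mem) haj
  plus i hi := by
    cases i with
    | zero =>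
      have h1 : t (w j + w (j + 1)) = w j + w (j + 1) := by
        rw [map_add, ht.apply_eq_self (by omega), ht.apply_eq_self (by omega)]
      change t (a (w j + w (j + 1))) = π ^ n • (w j + w (j + 1))
      rw [ha.apply_plus hj, map_smul, h1]
    | succ i =>
      have h1 : ∀ k, j + 2 ≤ k → k ≤ l → a (w k) = w k := fun k hk hkl =>
        ha.apply_of_orth (S.orth k hkl j (by omega) (by omega))
          (S.orth k hkl (j + 1) hj (by omega))
      have h2 := ht.plus i (by omega)
      rw [show j + 2 + 2 * i = j + 2 * (i + 1) by ring] at h2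
      rw [LinearEquiv.mul_apply, map_add, h1 _ (by omega) (by omega), h1 _ (by omega) hi, h2]
  minus i hi := by
    cases i with
    | zero =>
      have h1 : t (w j - w (j + 1)) = w j - w (j + 1) := by
        rw [map_sub, ht.apply_eq_self (by omega), ht.apply_eq_self (by omega)]
      change t (a (w j - w (j + 1))) = (σ (π ^ n))⁻¹ • (w j - w (j + 1))
      rw [ha.apply_minus hj, map_smul, h1]
    | succ i =>
      have h1 : ∀ k, j + 2 ≤ k → k ≤ l → a (w k) = w k := fun k hk hkl =>
        ha.apply_of_orth (S.orth k hkl j (by omega) (by omega))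
          (S.orth k hkl (j + 1) hj (by omega))
      have h2 := ht.minus i (by omega)
      rw [show j + 2 + 2 * i = j + 2 * (i + 1) by ring] at h2
      rw [LinearEquiv.mul_apply, map_sub, h1 _ (by omega) (by omega), h1 _ (by omega) hi, h2]
  fix v hv := by
    have h0 := hv 0 (by omega)
    rw [LinearEquiv.mul_apply, ha.apply_of_orth h0.1 h0.2]
    refine ht.fix v fun i hi => ?_
    have := hv (i + 1) (by omega)
    rwa [show j + 2 * (i + 1) = j + 2 + 2 * i by ring] at this

end IsTorus

theorem IsRankOneTorus.apply_signed [CharZero E] {S : HermSetting σ h ν l w} {π : E} {j : ℕ}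
    {ε : ℤ} (hε : ε = 1 ∨ ε = -1) (hj : j + 1 ≤ l) {n : ℕ} {a : V ≃ₗ[E] V}
    (ha : IsRankOneTorus S j (π ^ (ε * n)) a) :
    (∃ ξ : E, ‖ξ‖ = ‖π‖ ^ n ∧ a (w j + ε • w (j + 1)) = ξ • (w j + ε • w (j + 1))) ∧
      ∃ ξ : E, ‖ξ‖ = ‖π‖⁻¹ ^ n ∧ a (w j - ε • w (j + 1)) = ξ • (w j - ε • w (j + 1)) := by
  rcases hε with rfl | rfl
  · refine ⟨⟨_, ?_, by simpa using ha.apply_plus hj⟩, _, ?_, by simpa using ha.apply_minus hj⟩ <;>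
      simp [S.norm_map]
  · refine ⟨⟨_, ?_, by simpa [← sub_eq_add_neg] using ha.apply_minus hj⟩, _, ?_,
      by simpa using ha.apply_plus hj⟩ <;> simp [S.norm_map]

theorem IsTorus.apply_signed {S : HermSetting σ h ν l w} {π : E} {j : ℕ}
    {ε : ℤ} (hε : ε = 1 ∨ ε = -1) (hj : j + 1 ≤ l) {m : ℕ → ℕ} {t : V ≃ₗ[E] V}
    (ht : IsTorus S π j (fun i => ε * m i) t) :
    (∃ ξ : E, ‖ξ‖ = ‖π‖ ^ m 0 ∧ t (w j + ε • w (j + 1)) = ξ • (w j + ε • w (j + 1))) ∧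
      ∃ ξ : E, ‖ξ‖ = ‖π‖⁻¹ ^ m 0 ∧ t (w j - ε • w (j + 1)) = ξ • (w j - ε • w (j + 1)) := by
  have hp := ht.plus 0 (by simpa using hj)
  have hm := ht.minus 0 (by simpa using hj)
  rcases hε with rfl | rfl
  · refine ⟨⟨_, ?_, by simpa using hp⟩, _, ?_, by simpa using hm⟩ <;> simp [S.norm_map]
  · refine ⟨⟨_, ?_, by simpa [← sub_eq_add_neg] using hm⟩, _, ?_, by simpa using hp⟩ <;>
      simp [S.norm_map]

theorem IsRankOneTorus.inv_signed [CharZero E] [FiniteDimensional E V]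
    {S : HermSetting σ h ν l w} {π : E} (hπ : π ≠ 0) {j : ℕ} {ε : ℤ} (hj : j + 1 ≤ l) {n : ℕ}
    {a : V ≃ₗ[E] V} (ha : IsRankOneTorus S j (π ^ (ε * n)) a) :
    IsRankOneTorus S j (π ^ (-ε * n)) a⁻¹ := by
  have := ha.inv hj (zpow_ne_zero _ hπ)
  rwa [← zpow_neg, ← neg_mul] at this

namespace HermSetting

theorem signed_add_sub (S : HermSetting σ h ν l w) {j : ℕ} {ε : ℤ} (hε : ε = 1 ∨ ε = -1)
    (hj : j + 1 ≤ l) : h (w j + ε • w (j + 1)) (w j - ε • w (j + 1)) = 2 * h (w j) (w j) := by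
  rcases hε with rfl | rfl
  · simpa using S.plus_minus hj
  · simpa [← sub_eq_add_neg] using S.minus_plus hj

theorem signed_orth (S : HermSetting σ h ν l w) {i j : ℕ} (ε : ℤ)
    (hj : j + 1 ≤ l) (hi : i < j) :
    h (w j + ε • w (j + 1)) (w i) = 0 := by
  rw [← Int.cast_smul_eq_zsmul E, S.add_left, S.smul_left, S.orth j (by omega) i (by omega)
    (by omega), S.orth (j + 1) hj i (by omega) (by omega)]
  simp

theorem exists_rankOne_decomposition (S : HermSetting σ h ν l w) [CompleteSpace E] [CharZero E]
    [FiniteDimensional E V] {π : E} (hπ : π ≠ 0)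
    (hπ1 : ‖π‖ < 1) {j : ℕ} (hj : j + 1 ≤ l) {ε : ℤ} (hε : ε = 1 ∨ ε = -1) :
    ∃ M : ℝ, 0 < M ∧ ∀ g ∈ isometryFixing S j, ∃ (n : ℕ) (a k b : V ≃ₗ[E] V),
      a ∈ isometryFixing S j ∧ IsRankOneTorus S j (π ^ (ε * n)) a ∧ k ∈ isometryFixing S j ∧
      BoundedBy M k ∧ b ∈ isometryFixing S (j + 1) ∧ g = b * a * k := by
  obtain ⟨C, hC0, hC⟩ := S.exists_norm_form_le
  have hνj := S.self_ne_zero (i := j) (by omega)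
  have hsub : w j - ε • w (j + 1) = w j + (-ε) • w (j + 1) := by rw [neg_smul, sub_eq_add_neg]
  have hef := S.signed_add_sub hε hj
  have hei : ∀ i < j, h (w j + ε • w (j + 1)) (w i) = 0 := fun i hi => S.signed_orth ε hj hi
  have hfi : ∀ i < j, h (w j - ε • w (j + 1)) (w i) = 0 := fun i hi => by
    rw [hsub]; exact S.signed_orth (-ε) hj hi
  have hw : w j = (2⁻¹ : E) • ((w j + ε • w (j + 1)) + (w j - ε • w (j + 1))) := by
    rw [add_add_sub_cancel, ← two_smul E (w j), inv_smul_smul₀ two_ne_zero]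
  have hact : ∀ (n : ℕ) (a : V ≃ₗ[E] V), IsRankOneTorus S j (π ^ (ε * n)) a →
      ∃ ξ ξ' : E, ‖ξ‖ = ‖π‖⁻¹ ^ n ∧ ‖ξ'‖ = ‖π‖ ^ n ∧
      a⁻¹ (w j) = (2⁻¹ : E) • (ξ • (w j + ε • w (j + 1)) + ξ' • (w j - ε • w (j + 1))) := by
    intro n a ha
    have hε' : -ε = 1 ∨ -ε = -1 := by rcases hε with rfl | rfl <;> simp
    obtain ⟨⟨ξ', hξ', hf⟩, ξ, hξ, he⟩ := (ha.inv_signed hπ hj).apply_signed hε' hj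
    rw [← hsub] at hf
    simp only [neg_smul, sub_neg_eq_add] at he
    refine ⟨ξ, ξ', hξ, hξ', ?_⟩
    rw [← he, ← hf, ← map_add, ← map_smul, ← hw]
  generalize w j + ε • w (j + 1) = e at *
  generalize w j - ε • w (j + 1) = f at *
  obtain ⟨M, δ, hM, hδ, hpair⟩ := S.exists_bounded_pairing (by omega : j ≤ l + 1) hfi
    (by rw [hef]; exact mul_ne_zero two_ne_zero hνj)
  have hπ' : 0 < ‖π‖ := norm_pos_iff.2 hπ
  have hρ : 1 < ‖π‖⁻¹ := (one_lt_inv₀ hπ').2 hπ1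
  set ρ := ‖π‖⁻¹
  have hρ0 : 0 < ρ := by linarith
  set τ := ‖(2⁻¹ : E)‖
  have hτ : 0 < τ := norm_pos_iff.2 (inv_ne_zero two_ne_zero)
  have hN : 0 < ‖h (w j) (w j)‖ := norm_pos_iff.2 hνj
  obtain ⟨x₀, hx₀, hx₀'⟩ : ∃ x₀ : ℝ, 0 < x₀ ∧ x₀ ^ 2 = ‖h (w j) (w j)‖ / C :=
    ⟨√(‖h (w j) (w j)‖ / C), by positivity, Real.sq_sqrt (by positivity)⟩
  obtain ⟨R, hR1, hR2, hR3⟩ : ∃ R : ℝ, 1 / x₀ ≤ R ∧ (2 + C) * (ρ / (τ * δ)) ≤ R ∧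
      τ * ρ * C * M * ‖f‖ / x₀ ^ 2 ≤ R :=
    ⟨max (1 / x₀) (max ((2 + C) * (ρ / (τ * δ))) (τ * ρ * C * M * ‖f‖ / x₀ ^ 2)),
      le_max_left _ _, (le_max_left _ _).trans (le_max_right _ _),
      (le_max_right _ _).trans (le_max_right _ _)⟩
  have hR0 : 0 < R := lt_of_lt_of_le (by positivity) hR1
  set Y := M + τ * (R * ‖e‖ + R * ‖f‖)
  have hY : 0 < Y := by positivity
  refine ⟨(1 + C * Y ^ 2) * M, by positivity, fun g hg => ?_⟩
  have hg' := (isometryFixing S j).inv_mem hg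
  have hνv : h (g⁻¹ (w j)) (g⁻¹ (w j)) = h (w j) (w j) := hg'.1 _ _
  have hvi : ∀ i < j, h (g⁻¹ (w j)) (w i) = 0 := fun i hi => by
    rw [S.fixing_apply_orth hg' hi]; exact S.orth _ (by omega) _ (by omega) (by omega)
  obtain ⟨k₁, hk₁, hk₁M, hk₁e⟩ := hpair _ hvi
  set X := ‖g⁻¹ (w j)‖
  have hX : x₀ ≤ X := by
    refine le_of_sq_le_sq ?_ (norm_nonneg _)
    rw [hx₀', div_le_iff₀ hC0, ← hνv]
    exact (hC _ _).trans (by simp only [X]; ring_nf; rfl)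
  have hX0 : 0 < X := hx₀.trans_le hX
  have hRX : 1 ≤ R * X := by
    rw [div_le_iff₀ hx₀] at hR1
    exact hR1.trans (by gcongr)
  obtain ⟨n, hn, hn'⟩ := exists_nat_pow_near hRX hρ
  obtain ⟨a, ha, haT⟩ := S.exists_rankOneTorus hj (zpow_ne_zero (ε * n) hπ)
  obtain ⟨ξ, ξ', hξ, hξ', hξa⟩ := hact n a haT
  have ha' := (isometryFixing S j).inv_mem ha
  have hXC : ‖h (w j) (w j)‖ ≤ C * X ^ 2 := by
    rw [← hνv]; exact (hC _ _).trans (by simp only [X]; ring_nf; rfl)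
  have hξ'le : ‖ξ'‖ ≤ ρ / (R * X) := by
    rw [hξ', le_div_iff₀ (by positivity), ← inv_inv ‖π‖]
    change ρ⁻¹ ^ n * _ ≤ ρ
    rw [inv_pow, inv_mul_le_iff₀ (by positivity)]
    rw [pow_succ] at hn'; exact hn'.le
  have hξ'1 : ‖ξ'‖ ≤ 1 := by rw [hξ']; exact pow_le_one₀ hπ'.le hπ1.le
  have hv₁ : ‖k₁ (g⁻¹ (w j))‖ ≤ M * X := hk₁M _
  have hc : h (k₁ (g⁻¹ (w j))) (k₁ (g⁻¹ (w j)) - a⁻¹ (w j)) = h (w j) (w j) -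
      2⁻¹ * (σ ξ * h (k₁ (g⁻¹ (w j))) e + σ ξ' * h (k₁ (g⁻¹ (w j))) f) := by
    rw [S.sub_right, hk₁.1, hνv, hξa, S.smul_right, S.add_right, S.smul_right, S.smul_right,
      map_inv₀, map_ofNat]
  have hcX : X ^ 2 ≤ ‖h (k₁ (g⁻¹ (w j))) (k₁ (g⁻¹ (w j)) - a⁻¹ (w j))‖ := by
    have h1 : (2 + C) * X ^ 2 ≤ ‖(2⁻¹ : E) * (σ ξ * h (k₁ (g⁻¹ (w j))) e)‖ := by
      rw [norm_mul, norm_mul, S.norm_map, hξ]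
      calc (2 + C) * X ^ 2 ≤ (R / (ρ / (τ * δ))) * X ^ 2 := by
            gcongr; rwa [le_div_iff₀ (by positivity)]
        _ = τ * ((R * X / ρ) * (δ * X)) := by field_simp
        _ ≤ τ * (ρ ^ n * ‖h (k₁ (g⁻¹ (w j))) e‖) := by
            gcongr
            rw [div_le_iff₀ hρ0, ← pow_succ]; exact hn'.le
    have h2 : ‖(2⁻¹ : E) * (σ ξ' * h (k₁ (g⁻¹ (w j))) f)‖ ≤ X ^ 2 := by
      rw [norm_mul, norm_mul, S.norm_map]
      calc τ * (‖ξ'‖ * ‖h (k₁ (g⁻¹ (w j))) f‖)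
          ≤ τ * (ρ / (R * X) * (C * (M * X) * ‖f‖)) := by
            gcongr; exact (hC _ _).trans (by gcongr)
        _ = (τ * ρ * C * M * ‖f‖) / R := by field_simp
        _ ≤ x₀ ^ 2 := by
            rw [div_le_iff₀ (by positivity)] at hR3
            rw [div_le_iff₀ hR0]; linarith
        _ ≤ X ^ 2 := by gcongr
    rw [hc, mul_add]
    have h3 := norm_sub_norm_le ((2⁻¹ : E) * (σ ξ * h (k₁ (g⁻¹ (w j))) e))
      (h (w j) (w j) - 2⁻¹ * (σ ξ' * h (k₁ (g⁻¹ (w j))) f))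
    have h4 := norm_sub_le (h (w j) (w j)) (2⁻¹ * (σ ξ' * h (k₁ (g⁻¹ (w j))) f))
    rw [show ∀ x y z : E, x - (y + z) = -(y - (x - z)) from fun x y z => by ring, norm_neg]
    linarith
  have hcpos := lt_of_lt_of_le (by positivity : 0 < X ^ 2) hcX
  obtain ⟨k₂, hk₂, hk₂v, hk₂M⟩ := S.exists_isometry_apply_eq hC (j := j)
    (by rw [hk₁.1, hνv]; exact (ha'.1 _ _).symm)
    (fun i hi => by rw [S.fixing_apply_orth hk₁ hi, hvi i hi])
    (fun i hi => by
      rw [S.fixing_apply_orth ha' hi]; exact S.orth _ (by omega) _ (by omega) (by omega))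
    (norm_pos_iff.1 hcpos)
  have hdist : ‖k₁ (g⁻¹ (w j)) - a⁻¹ (w j)‖ ≤ Y * X := by
    refine (norm_sub_le _ _).trans ?_
    have : ‖a⁻¹ (w j)‖ ≤ τ * (R * X * ‖e‖ + R * X * ‖f‖) := by
      rw [hξa, norm_smul]
      gcongr
      refine (norm_add_le _ _).trans ?_
      rw [norm_smul, norm_smul]
      gcongr
      · exact hξ.trans_le hn
      · exact hξ'1.trans hRX
    calc _ ≤ M * X + τ * (R * X * ‖e‖ + R * X * ‖f‖) := add_le_add hv₁ this
      _ = Y * X := by simp only [Y]; ring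
  have hk₂Y : BoundedBy (1 + C * Y ^ 2) k₂ := by
    refine hk₂M.mono ?_
    gcongr
    rw [div_le_iff₀ hcpos]
    calc _ ≤ C * (Y * X) ^ 2 := by gcongr
      _ = C * Y ^ 2 * X ^ 2 := by ring
      _ ≤ _ := by gcongr
  refine ⟨n, a, k₂ * k₁, g * (k₂ * k₁)⁻¹ * a⁻¹, ha, haT, mul_mem hk₂ hk₁,
    hk₂Y.mul hk₁M (by positivity), ?_, by group⟩
  have hmem : g * (k₂ * k₁)⁻¹ * a⁻¹ ∈ isometryFixing S j :=
    mul_mem (mul_mem hg (inv_mem (mul_mem hk₂ hk₁))) ha'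
  refine ⟨hmem.1, fun i hi => ?_⟩
  rcases Nat.lt_succ_iff_lt_or_eq.1 hi with hi | rfl
  · exact hmem.2 i hi
  · have : (k₂ * k₁)⁻¹ (a⁻¹ (w i)) = g⁻¹ (w i) := by
      rw [← hk₂v]
      change ((k₂ * k₁)⁻¹ * (k₂ * k₁)) (g⁻¹ (w i)) = _
      rw [inv_mul_cancel]; rfl
    change g ((k₂ * k₁)⁻¹ (a⁻¹ (w i))) = _
    rw [this]
    change (g * g⁻¹) (w i) = _
    rw [mul_inv_cancel]; rfl

end HermSetting

namespace HermSetting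

/-- Eichler transformations along `w (j + 1)` by vectors that are small compared with a rank one
torus element stay small after conjugation by that element. -/
theorem exists_eichler_conj_small (S : HermSetting σ h ν l w) [CompleteSpace E] [CharZero E]
    [FiniteDimensional E V] {π : E} (hπ : π ≠ 0) (hπ1 : ‖π‖ < 1) {j : ℕ} (hj : j + 1 ≤ l) {ε : ℤ}
    (hε : ε = 1 ∨ ε = -1) {N : V → ℝ} {C₀ L : ℝ} (hC₀ : 0 < C₀) (hL : 0 < L)
    (hN : ∀ u v, N (u + v) ≤ max (N u) (N v)) (hN₁ : ∀ v, N v ≤ C₀ * ‖v‖)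
    (hN₂ : ∀ v, ‖v‖ ≤ C₀ * N v) :
    ∃ c : ℕ, ∀ (n : ℕ) (a : V ≃ₗ[E] V) (y : V), a ∈ isometryFixing S j →
      IsRankOneTorus S j (π ^ (ε * n)) a → h y y = 0 → (∀ i < j + 2, h y (w i) = 0) →
      ‖y‖ ≤ L * ‖π‖ ^ (n + c) →
      ∃ s ∈ isometryFixing S (j + 1), s (w (j + 1)) = w (j + 1) + y ∧
        ∀ v, N ((a⁻¹ * s⁻¹ * a) v) ≤ N v := by
  obtain ⟨C, hC0, hC⟩ := S.exists_norm_form_le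
  obtain ⟨A, hA0, hA⟩ := S.exists_bound_rankOneTorus j
  have hν := S.self_ne_zero hj
  have hν' : 0 < ‖(h (w (j + 1)) (w (j + 1)))⁻¹‖ := norm_pos_iff.2 (inv_ne_zero hν)
  have hπ' : 0 < ‖π‖ := norm_pos_iff.2 hπ
  set K := ‖(h (w (j + 1)) (w (j + 1)))⁻¹‖ *
    (4 * C * A * L * ‖w (j + 1)‖ + ‖(2⁻¹ : E)‖ * C * L ^ 2) with hK
  have hK0 : 0 ≤ K := by positivity
  obtain ⟨c, hc⟩ := exists_pow_lt_of_lt_one (by positivity : 0 < 1 / (C₀ ^ 2 * (K + 1))) hπ1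
  refine ⟨c, fun n a y ha haT hyy hyi hyn => ?_⟩
  obtain ⟨s, hs, hsx⟩ := S.exists_eichler (j := j + 1) (u := w (j + 1)) (y := -y) hν
    (by rw [S.neg_left, S.neg_right, hyy, neg_zero, neg_zero])
    (by rw [S.neg_right, S.orth_symm (hyi (j + 1) (by omega)), neg_zero])
    (fun i hi => S.orth _ hj _ (by omega) (by omega))
    (fun i hi => by rw [S.neg_left, hyi i (by omega), neg_zero])
  have hsw : s (w (j + 1) + y) = w (j + 1) := by
    rw [hsx]
    simp only [S.neg_right, S.add_left, hyy, hyi (j + 1) (by omega),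
      S.orth_symm (hyi (j + 1) (by omega)), add_zero, neg_zero, zero_smul, sub_zero, mul_zero]
    rw [smul_smul, inv_mul_cancel₀ hν]; simp
  have haT' := haT.inv_signed hπ hj
  have ha' := (isometryFixing S j).inv_mem ha
  have hay : a⁻¹ y = y := haT'.apply_of_orth (hyi j (by omega)) (hyi (j + 1) (by omega))
  have hformy : ∀ x, h (a x) y = h x y := fun x => by
    have := S.form_inv_left ha' x y
    rwa [inv_inv, hay] at this
  have hformw : ∀ x, h (a x) (w (j + 1)) = h x (a⁻¹ (w (j + 1))) := fun x => by
    have := S.form_inv_left ha' x (w (j + 1))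
    rwa [inv_inv] at this
  have hρ1 : 1 ≤ ‖π‖⁻¹ ^ n := one_le_pow₀ ((one_le_inv₀ hπ').2 hπ1.le)
  have haB : ‖a⁻¹ (w (j + 1))‖ ≤ 2 * A * ‖π‖⁻¹ ^ n * ‖w (j + 1)‖ := by
    have hn1 : ‖π‖ ^ n ≤ ‖π‖⁻¹ ^ n := (pow_le_one₀ hπ'.le hπ1.le).trans hρ1
    refine (hA (‖π‖⁻¹ ^ n) _ _ haT' (by positivity) ?_ ?_ _).trans ?_
    · rcases hε with rfl | rfl
      · simp
      · simpa using hn1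
    · rcases hε with rfl | rfl
      · simpa using hn1
      · simp
    · refine mul_le_mul_of_nonneg_right ?_ (norm_nonneg _)
      nlinarith
  have hcL : L * ‖π‖ ^ (n + c) ≤ L * ‖π‖ ^ c :=
    mul_le_mul_of_nonneg_left (pow_le_pow_of_le_one hπ'.le hπ1.le (by omega)) hL.le
  have hc1 : ‖π‖ ^ c ≤ 1 := pow_le_one₀ hπ'.le hπ1.le
  have hay' : ‖y‖ * ‖a⁻¹ (w (j + 1))‖ ≤ 2 * A * L * ‖w (j + 1)‖ * ‖π‖ ^ c := by
    calc _ ≤ (L * ‖π‖ ^ (n + c)) * (2 * A * ‖π‖⁻¹ ^ n * ‖w (j + 1)‖) := by gcongr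
      _ = 2 * A * L * ‖w (j + 1)‖ * ‖π‖ ^ c * (‖π‖ * ‖π‖⁻¹) ^ n := by rw [pow_add, mul_pow]; ring
      _ = _ := by rw [mul_inv_cancel₀ hπ'.ne']; ring
  have hyy' : ‖y‖ * ‖y‖ ≤ L ^ 2 * ‖π‖ ^ c := by
    calc _ ≤ (L * ‖π‖ ^ c) * (L * ‖π‖ ^ c) := by gcongr <;> exact hyn.trans hcL
      _ = L ^ 2 * ‖π‖ ^ c * ‖π‖ ^ c := by ring
      _ ≤ L ^ 2 * ‖π‖ ^ c * 1 := by gcongr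
      _ = _ := mul_one _
  refine ⟨s⁻¹, inv_mem hs, ?_, fun x => ?_⟩
  · rw [← hsw]
    change (s⁻¹ * s) (w (j + 1) + y) = _
    rw [inv_mul_cancel, hsw]; rfl
  · set d := (h (w (j + 1)) (w (j + 1)))⁻¹ • (-(h x (a⁻¹ (w (j + 1))) • y) +
      h x y • a⁻¹ (w (j + 1)) - (2⁻¹ * h x y) • y) with hd
    have hxd : (a⁻¹ * s⁻¹⁻¹ * a) x = x + d := by
      rw [inv_inv]
      change a⁻¹ (s (a x)) = _
      rw [hsx, hd, map_add, map_smul]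
      simp only [map_sub, map_smul, map_neg, hay, S.neg_right, hformy, hformw]
      have : a⁻¹ (a x) = x := by change (a⁻¹ * a) x = x; rw [inv_mul_cancel]; rfl
      rw [this]
      module
    rw [hxd]
    refine (hN x d).trans (max_le le_rfl ?_)
    have hdn : ‖d‖ ≤ K * ‖π‖ ^ c * ‖x‖ := by
      rw [hd, norm_smul, hK, mul_assoc, mul_assoc]
      gcongr
      calc _ ≤ ‖h x (a⁻¹ (w (j + 1)))‖ * ‖y‖ + ‖h x y‖ * ‖a⁻¹ (w (j + 1))‖ +
            ‖(2⁻¹ : E)‖ * ‖h x y‖ * ‖y‖ := by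
            refine (norm_sub_le _ _).trans (add_le_add ((norm_add_le _ _).trans ?_) ?_)
            · rw [norm_neg, norm_smul, norm_smul]
            · rw [norm_smul, norm_mul]
        _ ≤ (C * ‖x‖ * ‖a⁻¹ (w (j + 1))‖) * ‖y‖ + (C * ‖x‖ * ‖y‖) * ‖a⁻¹ (w (j + 1))‖ +
            ‖(2⁻¹ : E)‖ * (C * ‖x‖ * ‖y‖) * ‖y‖ := by gcongr <;> exact hC _ _
        _ = 2 * C * ‖x‖ * (‖y‖ * ‖a⁻¹ (w (j + 1))‖) + ‖(2⁻¹ : E)‖ * C * ‖x‖ * (‖y‖ * ‖y‖) := by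
            ring
        _ ≤ 2 * C * ‖x‖ * (2 * A * L * ‖w (j + 1)‖ * ‖π‖ ^ c) +
            ‖(2⁻¹ : E)‖ * C * ‖x‖ * (L ^ 2 * ‖π‖ ^ c) := by gcongr
        _ = _ := by ring
    have hNx : 0 ≤ N x := by
      by_contra hneg
      have := hN₂ x
      have := norm_nonneg x
      nlinarith [mul_pos hC₀ (neg_pos.2 (not_le.1 hneg))]
    calc N d ≤ C₀ * (K * ‖π‖ ^ c * ‖x‖) := (hN₁ d).trans (by gcongr)
      _ ≤ C₀ * (K * (1 / (C₀ ^ 2 * (K + 1))) * (C₀ * N x)) := by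
          gcongr
          exact hN₂ x
      _ = K / (K + 1) * N x := by field_simp
      _ ≤ 1 * N x := by
          gcongr
          rw [div_le_one (by positivity)]; linarith
      _ = N x := one_mul _

/-- If `b = k₁⁻¹ * t₁⁻¹ * t₂ * k₂` almost maximizes `‖b (w (j + 1))‖` under right multiplication by
elements that stay small after conjugation by `a`, then the leading exponent of `t₂` is controlled
by the exponent of `a`. -/
theorem exists_leading_exponent_le (S : HermSetting σ h ν l w) [CompleteSpace E] [CharZero E]
    [FiniteDimensional E V] {π : E} (hπ : π ≠ 0) (hπ1 : ‖π‖ < 1) {j : ℕ} (hj : j + 3 ≤ l) {ε : ℤ}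
    (hε : ε = 1 ∨ ε = -1) {N : V → ℝ} {C₀ M : ℝ} (hC₀ : 0 < C₀) (hM : 0 < M)
    (hN : ∀ u v, N (u + v) ≤ max (N u) (N v)) (hN₁ : ∀ v, N v ≤ C₀ * ‖v‖)
    (hN₂ : ∀ v, ‖v‖ ≤ C₀ * N v) :
    ∃ c : ℕ, ∀ (n : ℕ) (a k₁ t₁ t₂ k₂ : V ≃ₗ[E] V) (m₁ m₂ : ℕ → ℕ), a ∈ isometryFixing S j →
      IsRankOneTorus S j (π ^ (ε * n)) a → BoundedBy M k₁ → BoundedBy M k₁⁻¹ →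
      BoundedBy M k₂⁻¹ → k₂ ∈ isometryFixing S (j + 2) →
      IsTorus S π (j + 1) (fun i => -ε * m₁ i) t₁ → IsTorus S π (j + 2) (fun i => ε * m₂ i) t₂ →
      (∀ s ∈ isometryFixing S (j + 1), (∀ v, N ((a⁻¹ * s⁻¹ * a) v) ≤ N v) →
        ‖(k₁⁻¹ * t₁⁻¹ * t₂ * k₂) (s (w (j + 1)))‖ ≤
          2 * ‖(k₁⁻¹ * t₁⁻¹ * t₂ * k₂) (w (j + 1))‖) →
      m₂ 0 ≤ n + c := by
  obtain ⟨C, hC0, hC⟩ := S.exists_norm_form_le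
  have hπ' : 0 < ‖π‖ := norm_pos_iff.2 hπ
  have hρ : 1 < ‖π‖⁻¹ := (one_lt_inv₀ hπ').2 hπ1
  have hε' : -ε = 1 ∨ -ε = -1 := by rcases hε with rfl | rfl <;> simp
  have hεn : ‖(ε : E)‖ = 1 := by rcases hε with rfl | rfl <;> simp
  set y := w (j + 2) - ε • w (j + 2 + 1) with hy
  set z := w (j + 1) + ε • w (j + 1 + 1) with hz
  set z' := w (j + 1) - ε • w (j + 1 + 1) with hz'
  have hyE : y = w (j + 2) - (ε : E) • w (j + 3) := by rw [hy, Int.cast_smul_eq_zsmul]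
  have hzE : z = w (j + 1) + (ε : E) • w (j + 2) := by rw [hz, Int.cast_smul_eq_zsmul]
  have hw : w (j + 1) = (2⁻¹ : E) • (z + z') := by
    rw [hz, hz', add_add_sub_cancel, ← two_smul E (w (j + 1)), inv_smul_smul₀ two_ne_zero]
  have hνne := S.self_ne_zero (i := j + 1) (by omega)
  have hνn : 0 < ‖h (w (j + 1)) (w (j + 1))‖ := norm_pos_iff.2 hνne
  have hyz : h y z = -(ε * h (w (j + 1)) (w (j + 1))) := by
    rw [hyE, hzE, S.sub_left, S.add_right, S.add_right, S.smul_right, S.smul_right, S.smul_left,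
      S.smul_left, S.orth (j + 2) (by omega) (j + 1) (by omega) (by omega),
      S.orth (j + 3) hj (j + 1) (by omega) (by omega),
      S.orth (j + 3) hj (j + 2) (by omega) (by omega), map_intCast,
      S.self_succ (i := j + 1) (by omega)]
    ring
  have hwz : h (w (j + 1)) z = h (w (j + 1)) (w (j + 1)) := by
    rw [hzE, S.add_right, S.smul_right, S.orth (j + 1) (by omega) (j + 2) (by omega) (by omega)]
    ring
  have hyy : h y y = 0 := by
    rw [hy]
    rcases hε with rfl | rfl
    · simpa using S.minus_minus (j := j + 2) (by omega)
    · simpa using S.plus_plus (j := j + 2) (by omega)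
  have hyi : ∀ i < j + 2, h y (w i) = 0 := fun i hi => by
    rw [hy, sub_eq_add_neg, ← neg_smul]; exact S.signed_orth (-ε) (by omega) hi
  obtain ⟨c₁, hc₁⟩ := S.exists_eichler_conj_small hπ hπ1 (by omega : j + 1 ≤ l) hε hC₀
    (L := M * (‖y‖ + 1)) (by positivity) hN hN₁ hN₂
  set K := 2 * C * ‖z‖ * M * M * (‖(2⁻¹ : E)‖ * (‖z‖ + ‖z'‖)) / ‖h (w (j + 1)) (w (j + 1))‖
  obtain ⟨c₂, hc₂⟩ := pow_unbounded_of_one_lt (K + 1) hρ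
  refine ⟨c₁ + c₂, fun n a k₁ t₁ t₂ k₂ m₁ m₂ ha haT hk₁ hk₁' hk₂' hk₂ ht₁ ht₂ hmax => ?_⟩
  have hk₂i := (isometryFixing S (j + 2)).inv_mem hk₂
  set m := n + c₁
  obtain ⟨s, hs, hsw, hsN⟩ := hc₁ n a (π ^ m • k₂⁻¹ y) ha haT
    (by rw [S.smul_left, S.smul_right, hk₂i.1, hyy]; simp)
    (fun i hi => by rw [S.smul_left, S.fixing_apply_orth hk₂i hi, hyi i hi, mul_zero])
    (by
      rw [norm_smul, norm_pow, mul_comm]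
      gcongr
      exact (hk₂' y).trans (by gcongr; linarith))
  obtain ⟨β, hβ, hβy⟩ := (ht₂.apply_signed hε (by omega)).2
  have hmax' := hmax s hs hsN
  have e₁ : (k₁⁻¹ * t₁⁻¹ * t₂ * k₂) (w (j + 1)) = k₁⁻¹ (t₁⁻¹ (w (j + 1))) := by
    change k₁⁻¹ (t₁⁻¹ (t₂ (k₂ (w (j + 1))))) = _
    rw [hk₂.2 _ (by omega), ht₂.mem.2 _ (by omega)]
  have e₂ : (k₁⁻¹ * t₁⁻¹ * t₂ * k₂) (s (w (j + 1))) =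
      k₁⁻¹ (t₁⁻¹ (w (j + 1) + (π ^ m * β) • y)) := by
    change k₁⁻¹ (t₁⁻¹ (t₂ (k₂ (s (w (j + 1)))))) = _
    have : k₂ (k₂⁻¹ y) = y := by change (k₂ * k₂⁻¹) y = y; rw [mul_inv_cancel]; rfl
    rw [hsw, map_add, hk₂.2 _ (by omega), map_smul, this, map_add, ht₂.mem.2 _ (by omega),
      map_smul, hβy, smul_smul]
  rw [e₁, e₂] at hmax'
  obtain ⟨γ, hγ, hγz⟩ := (ht₁.apply_signed hε' (by omega)).2
  obtain ⟨γ', hγ', hγz'⟩ := (ht₁.apply_signed hε' (by omega)).1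
  rw [neg_smul, sub_neg_eq_add, ← hz] at hγz
  rw [neg_smul, ← sub_eq_add_neg, ← hz'] at hγz'
  have hγ0 : γ ≠ 0 := norm_pos_iff.1 (by rw [hγ]; positivity)
  have hγ'0 : γ' ≠ 0 := norm_pos_iff.1 (by rw [hγ']; positivity)
  have hρr : 1 ≤ ‖π‖⁻¹ ^ m₁ 0 := one_le_pow₀ hρ.le
  have hup : ‖t₁⁻¹ (w (j + 1))‖ ≤ ‖(2⁻¹ : E)‖ * (‖z‖ + ‖z'‖) * ‖π‖⁻¹ ^ m₁ 0 := by
    nth_rewrite 1 [hw]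
    rw [map_smul, map_add, IsTorus.apply_inv_eq hγ0 hγz, IsTorus.apply_inv_eq hγ'0 hγz', norm_smul,
      mul_assoc, add_mul]
    gcongr
    refine (norm_add_le _ _).trans ?_
    rw [norm_smul, norm_smul, norm_inv, norm_inv, hγ, hγ', mul_comm, mul_comm _ ‖z'‖, inv_pow]
    gcongr
    rw [← inv_pow]
    exact (pow_le_one₀ hπ'.le hπ1.le).trans hρr
  have hlow : ‖π‖⁻¹ ^ m₁ 0 * (‖h (w (j + 1)) (w (j + 1))‖ * ‖1 - ε * (π ^ m * β)‖) ≤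
      C * ‖z‖ * ‖t₁⁻¹ (w (j + 1) + (π ^ m * β) • y)‖ := by
    have : h (t₁⁻¹ (w (j + 1) + (π ^ m * β) • y)) z =
        σ γ * (h (w (j + 1)) (w (j + 1)) * (1 - ε * (π ^ m * β))) := by
      rw [S.form_inv_left ht₁.mem, hγz, S.smul_right, S.add_left, S.smul_left, hyz, hwz]
      ring
    rw [← hγ, ← S.norm_map γ, ← norm_mul, ← norm_mul, ← this]
    exact (hC _ _).trans_eq (by ring)
  have hk₁x : ∀ x, ‖x‖ ≤ M * ‖k₁⁻¹ x‖ := fun x => by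
    have := hk₁ (k₁⁻¹ x)
    rwa [show k₁ (k₁⁻¹ x) = x by change (k₁ * k₁⁻¹) x = x; rw [mul_inv_cancel]; rfl] at this
  have hchain : ‖π‖⁻¹ ^ m₁ 0 * (‖h (w (j + 1)) (w (j + 1))‖ * ‖1 - ε * (π ^ m * β)‖) ≤
      ‖π‖⁻¹ ^ m₁ 0 * (‖h (w (j + 1)) (w (j + 1))‖ * K) := by
    calc _ ≤ C * ‖z‖ * (M * ‖k₁⁻¹ (t₁⁻¹ (w (j + 1) + (π ^ m * β) • y))‖) :=
          hlow.trans (by gcongr; exact hk₁x _)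
      _ ≤ C * ‖z‖ * (M * (2 * (M * (‖(2⁻¹ : E)‖ * (‖z‖ + ‖z'‖) * ‖π‖⁻¹ ^ m₁ 0)))) := by
          gcongr
          refine hmax'.trans ?_
          gcongr
          exact (hk₁' _).trans (by gcongr)
      _ = _ := by simp only [K]; field_simp
  have hK1 : ‖1 - ε * (π ^ m * β)‖ ≤ K :=
    le_of_mul_le_mul_left (le_of_mul_le_mul_left hchain (by positivity)) hνn
  have hπβ : ‖π‖ ^ m * ‖π‖⁻¹ ^ m₂ 0 ≤ K + 1 := by
    have h1 := norm_sub_norm_le ((ε : E) * (π ^ m * β)) 1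
    rw [norm_sub_rev, norm_mul, norm_mul, hεn, one_mul, norm_pow, hβ, norm_one] at h1
    linarith
  by_contra hlt
  have hle : m + c₂ ≤ m₂ 0 := by omega
  have h1 : ‖π‖ ^ m * ‖π‖⁻¹ ^ (m + c₂) ≤ ‖π‖ ^ m * ‖π‖⁻¹ ^ m₂ 0 := by
    gcongr
    exact hρ.le
  rw [pow_add _ m c₂, ← mul_assoc, ← mul_pow, mul_inv_cancel₀ hπ'.ne', one_pow, one_mul] at h1
  linarith

end HermSetting

theorem exists_forall_le_two_mul {α : Type*} {D : Set α} {f : α → ℝ} (hD : D.Nonempty)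
    (hf : ∀ x, 0 ≤ f x) (hbdd : BddAbove (f '' D)) : ∃ x ∈ D, ∀ y ∈ D, f y ≤ 2 * f x := by
  rcases le_or_gt (sSup (f '' D)) 0 with hs | hs
  · obtain ⟨x, hx⟩ := hD
    refine ⟨x, hx, fun y hy => ?_⟩
    have := le_csSup hbdd (Set.mem_image_of_mem f hy)
    linarith [hf x]
  · obtain ⟨_, ⟨x, hx, rfl⟩, hlt⟩ :=
      exists_lt_of_lt_csSup (hD.image f) (half_lt_self hs)
    refine ⟨x, hx, fun y hy => ?_⟩
    have := le_csSup hbdd (Set.mem_image_of_mem f hy)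
    linarith

/-- Every isometry fixing `w 0, …, w (j - 1)` is, up to bounded factors, a product of torus elements
for the hyperbolic pairs starting at `w (j + 1)` and at `w j`, in the chambers given by the sign
`ε`. -/
def HasCartanDecomposition {σ : E ≃+* E} {h : V → V → E} {ν : E} {l : ℕ} {w : ℕ → V}
    (S : HermSetting σ h ν l w) (π : E) (j : ℕ) (ε : ℤ) : Prop :=
  ∃ M : ℝ, 0 < M ∧ ∀ g ∈ isometryFixing S j, ∃ (k' t' t k : V ≃ₗ[E] V) (m' m : ℕ → ℕ),
    k' ∈ isometryFixing S (j + 1) ∧ k ∈ isometryFixing S j ∧ BoundedBy M k' ∧ BoundedBy M k ∧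
    IsTorus S π (j + 1) (fun i => ε * m' i) t' ∧ IsTorus S π j (fun i => ε * m i) t ∧
    (∀ i, j + 1 + 2 * (i + 1) + 1 ≤ l → m' (i + 1) ≤ m' i) ∧
    (∀ i, j + 2 * (i + 1) + 1 ≤ l → m (i + 1) ≤ m i) ∧ g = k' * t' * t * k

namespace HermSetting

theorem hasCartanDecomposition_last (S : HermSetting σ h ν l w) [CompleteSpace E] [ProperSpace E]
    [FiniteDimensional E V] (haniso : ∀ v, (∀ i < l, h v (w i) = 0) → v ≠ 0 → h v v ≠ 0)
    (π : E) (ε : ℤ) : HasCartanDecomposition S π l ε := by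
  obtain ⟨M, hM, hM'⟩ := S.exists_bound_of_anisotropic (by omega : l ≤ l + 1) haniso
  refine ⟨M + 1, by positivity, fun g hg => ⟨1, 1, 1, g, 0, 0, one_mem _, hg,
    boundedBy_one.mono (by linarith), (hM' g hg).mono (by linarith), IsTorus.one (by omega),
    IsTorus.one (by omega), fun i hi => by omega, fun i hi => by omega, by group⟩⟩

theorem exists_rankOneTorus_split (S : HermSetting σ h ν l w) [CompleteSpace E] [CharZero E]
    [FiniteDimensional E V] {π : E} (hπ : π ≠ 0) (hπ1 : ‖π‖ < 1) {j : ℕ} (hj : j + 1 ≤ l) {ε : ℤ}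
    (hε : ε = 1 ∨ ε = -1) (c : ℕ) :
    ∃ M : ℝ, 0 < M ∧ ∀ (n n' : ℕ) (a : V ≃ₗ[E] V), n ≤ n' → n' ≤ n + c →
      IsRankOneTorus S j (π ^ (ε * n)) a →
      ∃ a' ∈ isometryFixing S j, IsRankOneTorus S j (π ^ (ε * n')) a' ∧
        ∃ b ∈ isometryFixing S j, BoundedBy M b ∧ a = a' * b := by
  obtain ⟨C, hC0, hC⟩ := S.exists_bound_rankOneTorus j
  have hπ' : 0 < ‖π‖ := norm_pos_iff.2 hπ
  have hρ : 1 ≤ ‖π‖⁻¹ := (one_le_inv₀ hπ').2 hπ1.le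
  refine ⟨C * (‖π‖⁻¹ ^ c + 1), by positivity, fun n n' a hn hn' ha => ?_⟩
  obtain ⟨d, rfl⟩ := Nat.exists_eq_add_of_le hn
  obtain ⟨a', ha', haT'⟩ := S.exists_rankOneTorus hj (zpow_ne_zero (ε * (n + d : ℕ)) hπ)
  obtain ⟨b, hb, hbT⟩ := S.exists_rankOneTorus hj (zpow_ne_zero (-(ε * d)) hπ)
  have hd : ‖π‖⁻¹ ^ d ≤ ‖π‖⁻¹ ^ c := pow_le_pow_right₀ hρ (by omega)
  have hd' : ‖π‖ ^ d ≤ ‖π‖⁻¹ ^ c := (pow_le_one₀ hπ'.le hπ1.le).trans (one_le_pow₀ hρ)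
  refine ⟨a', ha', haT', b, hb, hC _ _ b hbT (by positivity) ?_ ?_, ?_⟩
  · rcases hε with rfl | rfl
    · simpa using hd
    · simpa using hd'
  · rcases hε with rfl | rfl
    · simpa using hd'
    · simpa using hd
  · have := haT'.mul hbT hj
    rw [← zpow_add₀ hπ, show ε * ((n + d : ℕ) : ℤ) + -(ε * d) = ε * n by push_cast; ring] at this
    ext x
    rw [ha x, this x]

theorem hasCartanDecomposition_of_succ (S : HermSetting σ h ν l w) [CompleteSpace E] [CharZero E]
    [FiniteDimensional E V] (hna : ∀ x y : E, ‖x + y‖ ≤ max ‖x‖ ‖y‖) {π : E} (hπ : π ≠ 0)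
    (hπ1 : ‖π‖ < 1) {j : ℕ} (hj : j + 1 ≤ l) {ε : ℤ} (hε : ε = 1 ∨ ε = -1)
    (hS : HasCartanDecomposition S π (j + 1) (-ε)) : HasCartanDecomposition S π j ε := by
  obtain ⟨N, C₀, hC₀, hN, hN₁, hN₂⟩ := exists_ultrametric_gauge (V := V) hna
  obtain ⟨Ci, hCi, hinv⟩ := S.exists_boundedBy_inv
  obtain ⟨MI, hMI, hS⟩ := hS
  obtain ⟨M₁, hM₁, hrank⟩ := S.exists_rankOne_decomposition hπ hπ1 hj hε
  set M₂ := MI + Ci * MI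
  have hM₂ : 0 < M₂ := by positivity
  have hinv' : ∀ {i : ℕ} {k : V ≃ₗ[E] V}, k ∈ isometryFixing S i → BoundedBy MI k →
      BoundedBy M₂ k⁻¹ := fun hk hkM => (hinv _ (S.fixing_mono (Nat.zero_le _) hk) _ hMI.le
        hkM).mono (by simp only [M₂]; linarith)
  have hle : ∀ {k : V ≃ₗ[E] V}, BoundedBy MI k → BoundedBy M₂ k := fun hk =>
    hk.mono (by simp only [M₂]; nlinarith)
  obtain ⟨c, hc⟩ : ∃ c : ℕ, ∀ (n : ℕ) (a k₁ t₁ t₂ k₂ : V ≃ₗ[E] V) (m₁ m₂ : ℕ → ℕ),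
      a ∈ isometryFixing S j →
      IsRankOneTorus S j (π ^ (ε * n)) a → BoundedBy M₂ k₁ → BoundedBy M₂ k₁⁻¹ →
      BoundedBy M₂ k₂⁻¹ → k₂ ∈ isometryFixing S (j + 2) →
      IsTorus S π (j + 1) (fun i => -ε * m₁ i) t₁ → IsTorus S π (j + 2) (fun i => ε * m₂ i) t₂ →
      (∀ s ∈ isometryFixing S (j + 1), (∀ v, N ((a⁻¹ * s⁻¹ * a) v) ≤ N v) →
        ‖(k₁⁻¹ * t₁⁻¹ * t₂ * k₂) (s (w (j + 1)))‖ ≤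
          2 * ‖(k₁⁻¹ * t₁⁻¹ * t₂ * k₂) (w (j + 1))‖) →
      ∃ n', n ≤ n' ∧ n' ≤ n + c ∧ (j + 3 ≤ l → m₂ 0 ≤ n') := by
    by_cases hj3 : j + 3 ≤ l
    · obtain ⟨c, hc⟩ := S.exists_leading_exponent_le hπ hπ1 hj3 hε hC₀ hM₂ hN hN₁ hN₂
      refine ⟨c, fun n a k₁ t₁ t₂ k₂ m₁ m₂ h1 h2 h3 h4 h5 h6 h7 h8 h9 => ⟨max n (m₂ 0),
        le_max_left _ _, max_le (by omega) (hc n a k₁ t₁ t₂ k₂ m₁ m₂ h1 h2 h3 h4 h5 h6 h7 h8 h9),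
        fun _ => le_max_right _ _⟩⟩
    · exact ⟨0, fun n _ _ _ _ _ _ _ _ _ _ _ _ _ _ _ _ => ⟨n, le_rfl, le_rfl, fun h => absurd h hj3⟩⟩
  obtain ⟨Ms, hMs, hsplit⟩ := S.exists_rankOneTorus_split hπ hπ1 hj hε c
  set Mk := C₀ ^ 2 * (C₀ ^ 2 * M₁)
  have hMk : 0 < Mk := by positivity
  refine ⟨M₂ + M₂ * (Ms * Mk), by positivity, fun g hg => ?_⟩
  obtain ⟨n, a, k, b₀, ha, haT, hk, hkM, hb₀, hgb₀⟩ := hrank g hg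
  set D : Set (V ≃ₗ[E] V) := {b | b ∈ isometryFixing S (j + 1) ∧
    ∀ v, N ((a⁻¹ * b⁻¹ * g) v) ≤ C₀ ^ 2 * M₁ * N v} with hD
  have hDmem : ∀ b ∈ D, a⁻¹ * b⁻¹ * g ∈ isometryFixing S j := fun b hb =>
    mul_mem (mul_mem (inv_mem ha) (inv_mem (S.fixing_mono (by omega) hb.1))) hg
  have hDk : ∀ b ∈ D, BoundedBy Mk (a⁻¹ * b⁻¹ * g) := fun b hb v => by
    calc _ ≤ C₀ * (C₀ ^ 2 * M₁ * (C₀ * ‖v‖)) := by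
          refine (hN₂ _).trans ?_
          gcongr
          exact (hb.2 v).trans (by gcongr; exact hN₁ v)
      _ = Mk * ‖v‖ := by simp only [Mk]; ring
  have hD₀ : b₀ ∈ D := by
    refine ⟨hb₀, fun v => ?_⟩
    rw [show a⁻¹ * b₀⁻¹ * g = k by rw [hgb₀]; group]
    calc N (k v) ≤ C₀ * (M₁ * (C₀ * N v)) := by
          refine (hN₁ _).trans ?_
          gcongr
          exact (hkM v).trans (by gcongr; exact hN₂ v)
      _ = _ := by ring
  obtain ⟨Mg, hMg, hMg'⟩ := exists_boundedBy g
  obtain ⟨b, hbD, hbmax⟩ := exists_forall_le_two_mul (f := fun b : V ≃ₗ[E] V => ‖b (w (j + 1))‖)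
    ⟨b₀, hD₀⟩ (fun _ => norm_nonneg _) (by
      refine ⟨Mg * (Ci * Mk * ‖a⁻¹ (w (j + 1))‖), ?_⟩
      rintro _ ⟨b, hb, rfl⟩
      have h1 := hinv _ (S.fixing_mono (Nat.zero_le _) (hDmem b hb)) _ hMk.le (hDk b hb)
      have h2 : b = g * ((a⁻¹ * b⁻¹ * g)⁻¹ * a⁻¹) := by group
      change ‖b (w (j + 1))‖ ≤ _
      nth_rewrite 1 [h2]
      exact (hMg' _).trans (by gcongr; exact h1 _))
  obtain ⟨k', t', t, k₁, m', m, hk', hk₁, hk'M, hk₁M, ht', ht, hm', hm, hb⟩ :=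
    hS b⁻¹ (inv_mem hbD.1)
  have hbe : b = k₁⁻¹ * t⁻¹ * t'⁻¹ * k'⁻¹ := by rw [← inv_inv b, hb]; group
  have ht'i : IsTorus S π (j + 2) (fun i => ε * m' i) t'⁻¹ := by
    simpa using ht'.inv hπ
  have hti : IsTorus S π (j + 1) (fun i => ε * m i) t⁻¹ := by
    simpa using ht.inv hπ
  obtain ⟨n', hnn', hn'c, hn'm⟩ := hc n a k₁ t t'⁻¹ k'⁻¹ m m' ha haT (hle hk₁M) (hinv' hk₁ hk₁M)
    (by rw [inv_inv]; exact hle hk'M) (inv_mem hk') ht ht'i (fun s hs hsN => by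
      rw [← hbe]
      refine hbmax (b * s) ⟨mul_mem hbD.1 hs, fun v => ?_⟩
      have : a⁻¹ * (b * s)⁻¹ * g = (a⁻¹ * s⁻¹ * a) * (a⁻¹ * b⁻¹ * g) := by group
      rw [this]
      exact (hsN _).trans (hbD.2 v))
  obtain ⟨a', ha', haT', τ, hτ, hτM, haτ⟩ := hsplit n n' a hnn' hn'c haT
  have hcomm : k'⁻¹ * a' = a' * k'⁻¹ := haT'.comm_of_fixing (inv_mem hk')
  have hk'j : k'⁻¹ ∈ isometryFixing S j := S.fixing_mono (by omega) (inv_mem hk')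
  refine ⟨k₁⁻¹, t⁻¹, t'⁻¹ * a', k'⁻¹ * (τ * (a⁻¹ * b⁻¹ * g)), m,
    fun i => Nat.casesOn i n' m', inv_mem hk₁, mul_mem hk'j (mul_mem hτ (hDmem b hbD)),
    (hinv' hk₁ hk₁M).mono (by nlinarith [mul_pos hMs hMk]),
    ((hinv' hk' hk'M).mul (hτM.mul (hDk b hbD) hMs.le) hM₂.le).mono (by linarith),
    hti, ?_, hm, ?_, ?_⟩
  · have := ht'i.cons haT' ha' hj
    convert this using 2 with i
    cases i <;> rfl
  · intro i hi
    cases i with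
    | zero => exact hn'm (by omega)
    | succ i => exact hm' i (by omega)
  · calc g = b * a * (a⁻¹ * b⁻¹ * g) := by group
      _ = k₁⁻¹ * t⁻¹ * t'⁻¹ * (k'⁻¹ * a') * τ * (a⁻¹ * b⁻¹ * g) := by
          nth_rewrite 1 [haτ, hbe]
          simp only [mul_assoc]
      _ = _ := by rw [hcomm]; simp only [mul_assoc]

theorem hasCartanDecomposition (S : HermSetting σ h ν l w) [CompleteSpace E] [ProperSpace E]
    [CharZero E] [FiniteDimensional E V] (hna : ∀ x y : E, ‖x + y‖ ≤ max ‖x‖ ‖y‖) {π : E}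
    (hπ : π ≠ 0) (hπ1 : ‖π‖ < 1)
    (haniso : ∀ v, (∀ i < l, h v (w i) = 0) → v ≠ 0 → h v v ≠ 0) {j : ℕ} (hj : j ≤ l) {ε : ℤ}
    (hε : ε = 1 ∨ ε = -1) : HasCartanDecomposition S π j ε := by
  induction hj using Nat.decreasingInduction generalizing ε with
  | self => exact S.hasCartanDecomposition_last haniso π ε
  | of_succ k hk ih =>
    exact S.hasCartanDecomposition_of_succ hna hπ hπ1 hk hε
      (ih (by rcases hε with rfl | rfl <;> simp))

end HermSetting

namespace HermSetting

/-- The isometries fixing `w i` for `i < j` of operator norm at most `M` form a compact set. -/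
theorem isCompact_bounded_isometries (S : HermSetting σ h ν l w) [CompleteSpace E] [ProperSpace E]
    [FiniteDimensional E V] (j : ℕ) (M : ℝ) :
    IsCompact {g : V →L[E] V | (∀ u v, h (g u) (g v) = h u v) ∧ (∀ i < j, g (w i) = w i) ∧
      ‖g‖ ≤ M} := by
  have : ProperSpace (V →L[E] V) := FiniteDimensional.proper E _
  have hev : ∀ v : V, Continuous fun g : V →L[E] V => g v :=
    fun v => (ContinuousLinearMap.apply E V v).continuous
  refine Metric.isCompact_of_isClosed_isBounded ?_
    ((Metric.isBounded_closedBall (x := (0 : V →L[E] V)) (r := M)).subset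
      fun g hg => by simpa using hg.2.2)
  simp only [Set.ofPred_and, Set.ofPred_forall]
  refine IsClosed.inter ?_ (IsClosed.inter ?_ ?_)
  · exact isClosed_iInter fun u => isClosed_iInter fun v =>
      isClosed_eq (S.continuous_form.comp ((hev u).prodMk (hev v))) continuous_const
  · exact isClosed_iInter fun i => isClosed_iInter fun _ => isClosed_eq (hev _) continuous_const
  · exact isClosed_le continuous_norm continuous_const

theorem mem_PadG (S : HermSetting σ h ν l w) [FiniteDimensional E V] {g : V →L[E] V}
    (hg : ∀ u v, h (g u) (g v) = h u v) : g ∈ PadG E V h := by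
  obtain ⟨e, he⟩ := S.exists_equiv_of_isometry g (map_add g) (map_smul g) hg
  refine ⟨?_, hg⟩
  rw [← show ⇑e = g from funext he]
  exact e.bijective

theorem orth_of_add_sub (S : HermSetting σ h ν l w) [CharZero E] {v x y : V}
    (hv : h v (x + y) = 0 ∧ h v (x - y) = 0) : h v x = 0 ∧ h v y = 0 := by
  obtain ⟨hp, hm⟩ := hv
  rw [S.add_right] at hp
  rw [S.sub_right] at hm
  have h2 : (2 : E) ≠ 0 := two_ne_zero
  exact ⟨(mul_eq_zero.1 (by linear_combination hp + hm : 2 * h v x = 0)).resolve_left h2,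
    (mul_eq_zero.1 (by linear_combination hp - hm : 2 * h v y = 0)).resolve_left h2⟩

theorem self_ne_zero_of_orth (S : HermSetting σ h ν l w)
    (hanV : ∀ v ∈ PadVan E V h l w, v ≠ 0 → h v v ≠ 0)
    (hanW : ∀ v ∈ PadWan E V h l w, v ≠ 0 → h v v ≠ 0) {v : V} (hv : ∀ i < l, h v (w i) = 0)
    (hv0 : v ≠ 0) : h v v ≠ 0 := by
  rcases Nat.even_or_odd' l with ⟨k, rfl | rfl⟩
  · refine hanV v (fun i hi hi' => ?_) hv0
    rw [S.add_right, S.sub_right, hv _ (by omega), hv _ (by omega)]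
    simp
  · refine hanW v ⟨hv 0 (by omega), fun i hi hi' => ?_⟩ hv0
    rw [S.add_right, S.sub_right, hv _ (by omega), hv _ (by omega)]
    simp

end HermSetting

theorem IsTorus.toCLM_mem_PadA0 {S : HermSetting σ h ν l w} [CompleteSpace E] [CharZero E]
    [FiniteDimensional E V] {π : E} (hπ : π ≠ 0) {valE : E → ℤ} (hval : ∀ k : ℕ, valE (π ^ k) = k)
    {t : V ≃ₗ[E] V} {m : ℕ → ℕ} (ht : IsTorus S π 0 (fun i => 1 * (m i : ℤ)) t)
    (hm : ∀ i, 0 + 2 * (i + 1) + 1 ≤ l → m (i + 1) ≤ m i) :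
    LinearMap.toContinuousLinearMap (t : V →ₗ[E] V) ∈ PadA0 E V h σ valE l w := by
  refine ⟨S.mem_PadG ht.mem.1, fun i => π ^ m (i - 1), fun i hi hi' => ?_, fun v hv => ?_,
    fun i hi hi' => ?_, fun _ => ?_⟩
  · obtain ⟨i, rfl⟩ := Nat.exists_eq_add_of_le' hi
    have hp := ht.plus i (by omega)
    have hq := ht.minus i (by omega)
    simp only [zero_add, one_mul, zpow_natCast] at hp hq
    exact ⟨pow_ne_zero _ hπ, hp, hq⟩
  · refine ht.fix v fun i hi => ?_
    have := S.orth_of_add_sub (hv (i + 1) (by omega) (by omega))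
    rw [show 0 + 2 * i = 2 * (i + 1) - 2 by omega,
      show 2 * (i + 1) - 2 + 1 = 2 * (i + 1) - 1 by omega]
    exact this
  · obtain ⟨i, rfl⟩ := Nat.exists_eq_add_of_le' hi
    simp only [hval, Nat.add_sub_cancel]
    exact_mod_cast hm i (by omega)
  · simp [hval]

theorem IsTorus.toCLM_mem_PadAH {S : HermSetting σ h ν l w} [CompleteSpace E] [CharZero E]
    [FiniteDimensional E V] {π : E} (hπ : π ≠ 0) {valE : E → ℤ} (hval : ∀ k : ℕ, valE (π ^ k) = k)
    {t : V ≃ₗ[E] V} {m : ℕ → ℕ} (ht : IsTorus S π (0 + 1) (fun i => 1 * (m i : ℤ)) t)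
    (hm : ∀ i, 0 + 1 + 2 * (i + 1) + 1 ≤ l → m (i + 1) ≤ m i) :
    LinearMap.toContinuousLinearMap (t : V →ₗ[E] V) ∈ PadAH E V h σ valE l w := by
  refine ⟨⟨S.mem_PadG ht.mem.1, ht.mem.2 0 (by omega)⟩, fun i => π ^ m (i - 1),
    fun i hi hi' => ?_, fun v hv => ?_, fun i hi hi' => ?_, fun _ => ?_⟩
  · obtain ⟨i, rfl⟩ := Nat.exists_eq_add_of_le' hi
    have hp := ht.plus i (by omega)
    have hq := ht.minus i (by omega)
    simp only [one_mul, zpow_natCast] at hp hq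
    rw [show 0 + 1 + 2 * i = 2 * (i + 1) - 1 by omega,
      show 2 * (i + 1) - 1 + 1 = 2 * (i + 1) by omega] at hp hq
    exact ⟨pow_ne_zero _ hπ, hp, hq⟩
  · refine ht.fix v fun i hi => ?_
    have := S.orth_of_add_sub (hv.2 (i + 1) (by omega) (by omega))
    rw [show 0 + 1 + 2 * i = 2 * (i + 1) - 1 by omega,
      show 2 * (i + 1) - 1 + 1 = 2 * (i + 1) by omega]
    exact this
  · obtain ⟨i, rfl⟩ := Nat.exists_eq_add_of_le' hi
    simp only [hval, Nat.add_sub_cancel]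
    exact_mod_cast hm i (by omega)
  · simp [hval]

theorem BoundedBy.norm_toCLM_le [CompleteSpace E] [FiniteDimensional E V] {M : ℝ} (hM : 0 ≤ M)
    {g : V ≃ₗ[E] V} (hg : BoundedBy M g) :
    ‖LinearMap.toContinuousLinearMap (g : V →ₗ[E] V)‖ ≤ M :=
  ContinuousLinearMap.opNorm_le_bound _ hM hg

end RelativeCartan

/-- relative Cartan decomposition `G₀ = C_H · A_H⁺ · A₀⁺ · C₀` with `C_H ⊆ H`
and `C₀ ⊆ G₀` compact. -/
theorem stmt_11 (E : Type*) [NontriviallyNormedField E] [CompleteSpace E] [CharZero E]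
    (hna : ∀ x y : E, ‖x + y‖ ≤ max ‖x‖ ‖y‖)
    (hloc : IsCompact (Metric.closedBall (0 : E) 1))
    (πE : E) (hπ0 : πE ≠ 0) (hπ1 : ‖πE‖ < 1)
    (valE : E → ℤ) (hval : ∀ x : E, x ≠ 0 → ‖x‖ = ‖πE‖ ^ valE x) (hvalπ : valE πE = 1)
    (σ : E ≃+* E) (hσ2 : ∀ x : E, σ (σ x) = x) (hσnt : ∃ x : E, σ x ≠ x)
    (hσiso : ∀ x : E, ‖σ x‖ = ‖x‖)
    (V₀ : Type*) [NormedAddCommGroup V₀] [NormedSpace E V₀] [FiniteDimensional E V₀]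
    (h : V₀ → V₀ → E)
    (haddl : ∀ u u' v : V₀, h (u + u') v = h u v + h u' v)
    (hsmull : ∀ (a : E) (u v : V₀), h (a • u) v = a * h u v)
    (hconj : ∀ u v : V₀, h v u = σ (h u v))
    (hnd : ∀ u : V₀, (∀ v : V₀, h u v = 0) → u = 0)
    (ν₀ : E) (hν0 : ν₀ ≠ 0) (hνF : σ ν₀ = ν₀)
    (l : ℕ) (w : ℕ → V₀)
    (horth : ∀ i ≤ l, ∀ j ≤ l, i ≠ j → h (w i) (w j) = 0)
    (hvalw : ∀ i ≤ l, h (w i) (w i) = (-1 : E) ^ i * ν₀)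
    (hanV : ∀ v ∈ PadVan E V₀ h l w, v ≠ 0 → h v v ≠ 0)
    (hanW : ∀ v ∈ PadWan E V₀ h l w, v ≠ 0 → h v v ≠ 0) :
    ∃ (CH C₀ : Set (V₀ →L[E] V₀)),
      CH ⊆ PadH E V₀ h (w 0) ∧ C₀ ⊆ PadG E V₀ h ∧ IsCompact CH ∧ IsCompact C₀ ∧
      ∀ g ∈ PadG E V₀ h, ∃ kH ∈ CH, ∃ aH ∈ PadAH E V₀ h (⇑σ) valE l w,
        ∃ a₀ ∈ PadA0 E V₀ h (⇑σ) valE l w, ∃ k₀ ∈ C₀,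
          g = kH.comp (aH.comp (a₀.comp k₀)) := by
  have hloc' : LocallyCompactSpace E := hloc.locallyCompactSpace_of_mem_nhds_of_addGroup
    (Metric.closedBall_mem_nhds 0 one_pos)
  have : ProperSpace E := .of_locallyCompactSpace E
  have S : HermSetting σ h ν₀ l w := ⟨haddl, hsmull, hconj, hnd, hσ2, hσnt, hσiso, hν0, hνF, horth,
    hvalw⟩
  have hvalpow : ∀ k : ℕ, valE (πE ^ k) = k := fun k => by
    have hk := hval _ (pow_ne_zero k hπ0)
    rw [norm_pow, ← zpow_natCast] at hk
    exact (zpow_right_injective₀ (norm_pos_iff.2 hπ0) hπ1.ne hk).symm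
  obtain ⟨M, hM, hdec⟩ := S.hasCartanDecomposition hna hπ0 hπ1
    (fun v hv hv0 => S.self_ne_zero_of_orth hanV hanW hv hv0) (Nat.zero_le l) (Or.inl rfl)
  refine ⟨_, _, fun g hg => ⟨S.mem_PadG hg.1, hg.2.1 0 one_pos⟩, fun g hg => S.mem_PadG hg.1,
    S.isCompact_bounded_isometries 1 M, S.isCompact_bounded_isometries 0 M, fun g hg => ?_⟩
  obtain ⟨e, he⟩ := S.exists_equiv_of_isometry g (map_add g) (map_smul g) hg.2
  obtain ⟨k', t', t, k, m', m, hk', hk, hk'M, hkM, ht', ht, hm', hm, hek⟩ :=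
    hdec e ⟨fun u v => by rw [he, he, hg.2], fun i hi => absurd hi (Nat.not_lt_zero i)⟩
  refine ⟨LinearMap.toContinuousLinearMap (k' : V₀ →ₗ[E] V₀),
    ⟨hk'.1, hk'.2, hk'M.norm_toCLM_le hM.le⟩,
    LinearMap.toContinuousLinearMap (t' : V₀ →ₗ[E] V₀), ht'.toCLM_mem_PadAH hπ0 hvalpow hm',
    LinearMap.toContinuousLinearMap (t : V₀ →ₗ[E] V₀), ht.toCLM_mem_PadA0 hπ0 hvalpow hm,
    LinearMap.toContinuousLinearMap (k : V₀ →ₗ[E] V₀), ⟨hk.1, hk.2, hkM.norm_toCLM_le hM.le⟩, ?_⟩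
  ext x
  rw [← he, hek]
  rfl
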